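/- Suppose 𝒮 is finite. For every n≥1 and all R̂₁,R̂₂>0 there exist operators T_X, T_Y, T₀ on (ℂ^𝒳)^{⊗n}⊗(ℂ^𝒴)^{⊗n}⊗H_B^{⊗n} with 0⪯T_X,T_Y,T₀⪯I such that for all probability distributions P_X on 𝒳 and P_Y on 𝒴 and all t∈(0,1), with f := (n+1)^{|𝒮|−1 + t|𝒳||𝒴|(d_B−1)d_B/2 + (d_B−1)t|𝒳||𝒴|}, g₁ := n^{|𝒳|d_B(d_B−1)/2}Λ(n,d_B)^{|𝒳|}, g₂ := n^{|𝒴|d_B(d_B−1)/2}Λ(n,d_B)^{|𝒴|}, g₃ := n^{d_B(d_B−1)/2}Λ(n,d_B), and minima over probability distributions Q on 𝒮: (i) for all s^n∈𝒮^n, Tr[(I−T_X)ρ^{XYB}_{P_X,P_Y,s^n}] ≤ f·2^{nt(R̂₂ − min_Q I_{1−t}[Y;B|X]_{P_X,P_Y,Q})}; (ii) for every family {σ_{x^n}}_{x^n∈𝒳^n} of density matrices on H_B^{⊗n}, Tr[T_X · Σ_{x^n,y^n} P_X^n(x^n)P_Y^n(y^n)|x^n⟩⟨x^n|⊗|y^n⟩⟨y^n|⊗σ_{x^n}]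 ≤ g₁·2^{−nR̂₂}; (iii) for all s^n∈𝒮^n, Tr[(I−T_Y)ρ^{XYB}_{P_X,P_Y,s^n}] ≤ f·2^{nt(R̂₁ − min_Q I_{1−t}[X;B|Y]_{P_X,P_Y,Q})}; (iv) for every family {σ_{y^n}}_{y^n∈𝒴^n}, Tr[T_Y · Σ_{x^n,y^n} P_X^n(x^n)P_Y^n(y^n)|x^n⟩⟨x^n|⊗|y^n⟩⟨y^n|⊗σ_{y^n}] ≤ g₂·2^{−nR̂₁}; (v) for all s^n∈𝒮^n, Tr[(I−T₀)ρ^{XYB}_{P_X,P_Y,s^n}] ≤ f·2^{nt(R̂₁+R̂₂ − min_Q I_{1−t}[XY;B]_{P_X,P_Y,Q})}; (vi) for every density matrix σ on H_B^{⊗n}, Tr[T₀ · Σ_{x^n,y^n} P_X^n(x^n)P_Y^n(y^n)|x^n⟩⟨x^n|⊗|y^n⟩⟨y^n|⊗σ] ≤ g₃·2^{−n(R̂₁+R̂₂)}. -/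

import Mathlib

open scoped ComplexOrder

noncomputable section

/-- A density matrix: positive semidefinite with unit trace. -/
def IsDensity {m : Type*} [Fintype m] (ρ : Matrix m m ℂ) : Prop :=
  ρ.PosSemidef ∧ ρ.trace = 1

/-- Loewner order `A ⪯ B`. -/
def Loewner {m : Type*} [Fintype m] (A B : Matrix m m ℂ) : Prop :=
  (B - A).PosSemidef

/-- Functional calculus for Hermitian matrices (junk value `0` on non-Hermitian input). -/
def matFun {m : Type*} [Fintype m] [DecidableEq m] (f : ℝ → ℝ) (A : Matrix m m ℂ) :
    Matrix m m ℂ :=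
  if hA : A.IsHermitian then
    (hA.eigenvectorUnitary : Matrix m m ℂ) *
        Matrix.diagonal (fun i => (f (hA.eigenvalues i) : ℂ)) *
      star (hA.eigenvectorUnitary : Matrix m m ℂ)
  else 0

/-- Matrix power, taken on the support (`0^p := 0` on the kernel). -/
def mpow {m : Type*} [Fintype m] [DecidableEq m] (A : Matrix m m ℂ) (p : ℝ) :
    Matrix m m ℂ :=
  matFun (fun u => if u ≤ 0 then 0 else u ^ p) A

/-- The classical–classical–quantum state `Σ_{x,y} wX(x)wY(y)|x⟩⟨x|⊗|y⟩⟨y|⊗ρ_{x,y}`. -/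
def cqState2 {X Y B : Type*} [DecidableEq X] [DecidableEq Y]
    (wX : X → ℝ) (wY : Y → ℝ) (ρ : X → Y → Matrix B B ℂ) :
    Matrix ((X × Y) × B) ((X × Y) × B) ℂ :=
  Matrix.of fun p q =>
    (if p.1 = q.1 then ((wX p.1.1 * wY p.1.2 : ℝ) : ℂ) else 0) * ρ p.1.1 p.1.2 p.2 q.2

/-- Tensor product of a finite family of matrices, realized on functions. -/
def tensorFam {k d : Type*} [Fintype k] (ρ : k → Matrix d d ℂ) :
    Matrix (k → d) (k → d) ℂ :=
  Matrix.of fun i j => ∏ a, ρ a (i a) (j a)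

/-- The `n`-copy classical–classical–quantum state with i.i.d. classical inputs. -/
def cq2n {𝒳 𝒴 : Type*} [Fintype 𝒳] [DecidableEq 𝒳] [Fintype 𝒴] [DecidableEq 𝒴] {d : ℕ}
    (n : ℕ) (PX : 𝒳 → ℝ) (PY : 𝒴 → ℝ)
    (F : (Fin n → 𝒳) → (Fin n → 𝒴) → Matrix (Fin n → Fin d) (Fin n → Fin d) ℂ) :
    Matrix (((Fin n → 𝒳) × (Fin n → 𝒴)) × (Fin n → Fin d))
      (((Fin n → 𝒳) × (Fin n → 𝒴)) × (Fin n → Fin d)) ℂ :=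
  cqState2 (fun xv : Fin n → 𝒳 => ∏ k, PX (xv k)) (fun yv : Fin n → 𝒴 => ∏ k, PY (yv k)) F

/-- `Λ(n,d)`: the number of partitions of `n` into at most `d` parts. -/
def numPartLe (n d : ℕ) : ℕ := Nat.card {p : Nat.Partition n // p.parts.card ≤ d}

/-- The Rényi-type quantity `I_{1−t}[X;B|Y]_{P_X,P_Y,Q}`, given the mixed states `ρQ x y`. -/
def renyiXgY {𝒳 𝒴 : Type*} [Fintype 𝒳] [Fintype 𝒴] {d : ℕ}
    (PX : 𝒳 → ℝ) (PY : 𝒴 → ℝ) (ρQ : 𝒳 → 𝒴 → Matrix (Fin d) (Fin d) ℂ) (t : ℝ) : ℝ :=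
  -((1 - t) / t) * Real.logb 2
    (∑ y, PY y *
      (Matrix.trace (mpow (∑ x, PX x • mpow (ρQ x y) (1 - t)) (1 / (1 - t)))).re)

/-- The Rényi-type quantity `I_{1−t}[Y;B|X]_{P_X,P_Y,Q}`. -/
def renyiYgX {𝒳 𝒴 : Type*} [Fintype 𝒳] [Fintype 𝒴] {d : ℕ}
    (PX : 𝒳 → ℝ) (PY : 𝒴 → ℝ) (ρQ : 𝒳 → 𝒴 → Matrix (Fin d) (Fin d) ℂ) (t : ℝ) : ℝ :=
  -((1 - t) / t) * Real.logb 2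
    (∑ x, PX x *
      (Matrix.trace (mpow (∑ y, PY y • mpow (ρQ x y) (1 - t)) (1 / (1 - t)))).re)

/-- The Rényi-type quantity `I_{1−t}[XY;B]_{P_X,P_Y,Q}`. -/
def renyiXY {𝒳 𝒴 : Type*} [Fintype 𝒳] [Fintype 𝒴] {d : ℕ}
    (PX : 𝒳 → ℝ) (PY : 𝒴 → ℝ) (ρQ : 𝒳 → 𝒴 → Matrix (Fin d) (Fin d) ℂ) (t : ℝ) : ℝ :=
  -((1 - t) / t) * Real.logb 2
    (Matrix.trace (mpow (∑ x, ∑ y, (PX x * PY y) • mpow (ρQ x y) (1 - t))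
      (1 / (1 - t)))).re

/-- The polynomial factor `f`. -/
def fFac (n cardS cardX cardY d : ℕ) (t : ℝ) : ℝ :=
  ((n : ℝ) + 1) ^ (((cardS : ℝ) - 1)
    + t * (cardX : ℝ) * (cardY : ℝ) * ((d : ℝ) - 1) * (d : ℝ) / 2
    + ((d : ℝ) - 1) * t * (cardX : ℝ) * (cardY : ℝ))

/-- The polynomial factor `n^{c·d(d−1)/2}·Λ(n,d)^c`. -/
def gFac (n c d : ℕ) : ℝ :=
  (n : ℝ) ^ ((c : ℝ) * (d : ℝ) * ((d : ℝ) - 1) / 2) * (numPartLe n d : ℝ) ^ c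

/-- Probability distributions on a finite set `𝒮`. -/
abbrev ProbVec (𝒮 : Type*) [Fintype 𝒮] : Type _ :=
  {Q : 𝒮 → ℝ // (∀ s, 0 ≤ Q s) ∧ ∑ s, Q s = 1}

/-!
For a word `z`, let `E z` be the mean of the squares of the permutations fixing `z`, acting on the
tensor power. Every permutation is conjugate to its inverse by a permutation fixing any prescribed
point, so the irreducible representations of the stabilizer of `z` are real, and `E z` acts on each
isotypic component as the inverse dimension of the irreducible representation. Hence `E z` dominates
every density matrix that the stabilizer leaves invariant, while its trace counts the solutions of
`i ∘ h ^ 2 = i` and is bounded by the number of symmetric tables of natural numbers, polynomial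
in `n`.

The test at words `(u, v)` is the Neyman–Pearson projection comparing the commuting operators
`E (u, v)` and `θ • E u`.

* Second kind: averaged over `v` the test is invariant under the stabilizer of `u`, so `σ u` may be
  replaced by `E u`, and `θ * Tr (T * E u) ≤ Tr E (u, v)`.
* First kind: for a product state `A`, `A ≤ E (u, v)` gives `A ≤ A ^ (1 - t) * E (u, v) ^ t`;
  rejection trades `E (u, v) ^ t` for `θ ^ t • E u ^ t`, and Hölder together with concavity yields
  the Rényi trace. A fixed state word is compared with i.i.d. letters of its empirical distribution
  at cost `(n + 1) ^ (|𝒮| - 1)` by the method of types.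

The threshold `θ` is calibrated by comparing the number of symmetric tables with
`n ^ (d * (d - 1) / 2) * Λ(n, d)`, and the joint test is the conditional one in which `u` ranges
over a one-letter alphabet.
-/

open scoped Matrix MatrixOrder

section SpectralResolution

variable {N J : Type*} [Fintype N] [DecidableEq N] [Fintype J]

/-- A resolution of the identity into mutually orthogonal Hermitian projections; some of them may
vanish. -/
structure SpectralResolution (p : J → Matrix N N ℂ) : Prop
    extends CompleteOrthogonalIdempotents p where
  isHermitian : ∀ j, (p j).IsHermitian

namespace SpectralResolution

lemma const_one [Unique J] : SpectralResolution (fun _ : J => (1 : Matrix N N ℂ)) where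
  toCompleteOrthogonalIdempotents := CompleteOrthogonalIdempotents.unique_iff.2 rfl
  isHermitian _ := Matrix.isHermitian_one

variable {p : J → Matrix N N ℂ} (hp : SpectralResolution p)

include hp

lemma mul_self (j : J) : p j * p j = p j := hp.idem j

lemma posSemidef (j : J) : (p j).PosSemidef := by
  simpa only [(hp.isHermitian j).eq, hp.mul_self] using
    Matrix.posSemidef_conjTranspose_mul_self (p j)

lemma mul_sum_smul (a : J → ℝ) (k : J) : p k * ∑ j, a j • p j = a k • p k := by
  rw [Finset.mul_sum, Finset.sum_eq_single k, mul_smul_comm, hp.mul_self]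
  · intro j _ hjk
    rw [mul_smul_comm, hp.ortho hjk.symm, smul_zero]
  · simp

lemma eq_sum_smul {A : Matrix N N ℂ} {a : J → ℝ} (hA : ∀ j, A * p j = a j • p j) :
    A = ∑ j, a j • p j := by
  rw [← Finset.sum_congr rfl fun j _ => hA j, ← Finset.mul_sum, hp.complete, mul_one]

lemma sum_smul_mul_sum_smul (a b : J → ℝ) :
    (∑ j, a j • p j) * ∑ j, b j • p j = ∑ j, (a j * b j) • p j := by
  simp only [Finset.sum_mul, smul_mul_assoc, hp.mul_sum_smul, smul_smul]

lemma isHermitian_sum_smul (a : J → ℝ) : (∑ j, a j • p j).IsHermitian :=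
  isSelfAdjoint_sum _ fun j _ => (IsSelfAdjoint.all (a j)).smul (hp.isHermitian j).isSelfAdjoint

lemma sum_smul_le_sum_smul {a b : J → ℝ} (hab : ∀ j, p j ≠ 0 → a j ≤ b j) :
    ∑ j, a j • p j ≤ ∑ j, b j • p j := by
  refine Finset.sum_le_sum fun j _ => ?_
  by_cases hj : p j = 0
  · simp [hj]
  · rw [Matrix.le_iff, ← sub_smul]
    exact (hp.posSemidef j).smul (sub_nonneg.2 (hab j hj))

lemma posSemidef_sum_smul {a : J → ℝ} (ha : ∀ j, p j ≠ 0 → 0 ≤ a j) :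
    (∑ j, a j • p j).PosSemidef := by
  simpa [Matrix.nonneg_iff_posSemidef] using hp.sum_smul_le_sum_smul (a := 0) ha

lemma coeff_nonneg {a : J → ℝ} (hA : (∑ j, a j • p j).PosSemidef) {j : J} (hj : p j ≠ 0) :
    0 ≤ a j := by
  by_contra! hneg
  have hcorner := hA.conjTranspose_mul_mul_same (p j)
  rw [(hp.isHermitian j).eq, hp.mul_sum_smul, smul_mul_assoc, hp.mul_self] at hcorner
  have hneg' : a j • p j ≤ 0 := by
    simpa [Matrix.le_iff] using (hp.posSemidef j).smul (neg_nonneg.2 hneg.le)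
  have hzero := le_antisymm hneg' hcorner.nonneg
  exact (smul_ne_zero hneg.ne hj) hzero

lemma aeval_sum_smul (a : J → ℝ) (P : Polynomial ℝ) :
    Polynomial.aeval (∑ j, a j • p j) P = ∑ j, P.eval (a j) • p j := by
  induction P using Polynomial.induction_on' with
  | add P Q hP hQ => simp [hP, hQ, add_smul, Finset.sum_add_distrib]
  | monomial m r =>
    have hpow : (∑ j, a j • p j) ^ m = ∑ j, a j ^ m • p j := by
      induction m with
      | zero => simp [hp.complete]
      | succ m ih => simp only [pow_succ, ih, hp.sum_smul_mul_sum_smul]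
    simp [Polynomial.aeval_monomial, hpow, Finset.mul_sum, Algebra.algebraMap_eq_smul_one,
      smul_smul, mul_comm]

lemma prod {K : Type*} [Fintype K] {q : K → Matrix N N ℂ} (hq : SpectralResolution q)
    (hpq : ∀ j k, Commute (p j) (q k)) :
    SpectralResolution fun jk : J × K => p jk.1 * q jk.2 := by
  have hmul (j j' : J) (k k' : K) :
      p j * q k * (p j' * q k') = p j * p j' * (q k * q k') :=
    (hpq j' k).symm.mul_mul_mul_comm _ _
  refine ⟨⟨⟨fun jk => ?_, fun jk jk' hne => ?_⟩, ?_⟩, fun jk => ?_⟩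
  · rw [IsIdempotentElem, hmul, hp.mul_self, hq.mul_self]
  · rcases Prod.ext_iff.not.1 hne |> not_and_or.1 with hj | hk
    · exact (hmul ..).trans (by rw [hp.ortho hj, zero_mul])
    · exact (hmul ..).trans (by rw [hq.ortho hk, mul_zero])
  · rw [Fintype.sum_prod_type]
    simp only [← Finset.mul_sum, hq.complete, mul_one, hp.complete]
  · rw [Matrix.IsHermitian, Matrix.conjTranspose_mul, (hp.isHermitian _).eq,
      (hq.isHermitian _).eq, (hpq _ _).eq]

end SpectralResolution

end SpectralResolution

section FunctionalCalculus

variable {N : Type*} [Fintype N] [DecidableEq N] {A : Matrix N N ℂ}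

lemma matFun_eq_cfc (hA : A.IsHermitian) (f : ℝ → ℝ) : matFun f A = cfc f A := by
  rw [hA.cfc_eq, matFun, dif_pos hA]
  rfl

lemma exists_polynomial_matFun_eq_aeval (hA : A.IsHermitian) (f : ℝ → ℝ) (s : Finset ℝ) :
    ∃ P : Polynomial ℝ, (∀ x ∈ s, P.eval x = f x) ∧ matFun f A = Polynomial.aeval A P := by
  classical
  let nodes := A.finite_real_spectrum.toFinset ∪ s
  have heval (x : ℝ) (hx : x ∈ nodes) : (Lagrange.interpolate nodes id f).eval x = f x :=
    Lagrange.eval_interpolate_at_node (v := id) f Function.injective_id.injOn hx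
  refine ⟨Lagrange.interpolate nodes id f, fun x hx => heval x (Finset.mem_union_right _ hx), ?_⟩
  rw [matFun_eq_cfc hA, ← cfc_polynomial _ A hA.isSelfAdjoint]
  exact cfc_congr fun x hx =>
    (heval x (Finset.mem_union_left _ (A.finite_real_spectrum.mem_toFinset.2 hx))).symm

lemma SpectralResolution.matFun_sum_smul {J : Type*} [Fintype J] {p : J → Matrix N N ℂ}
    (hp : SpectralResolution p) (f : ℝ → ℝ) (a : J → ℝ) :
    matFun f (∑ j, a j • p j) = ∑ j, f (a j) • p j := by
  classical
  obtain ⟨P, hPa, hP⟩ :=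
    exists_polynomial_matFun_eq_aeval (hp.isHermitian_sum_smul a) f (Finset.univ.image a)
  rw [hP, hp.aeval_sum_smul]
  simp only [hPa _ (Finset.mem_image_of_mem a (Finset.mem_univ _))]

lemma matFun_mem_adjoin (hA : A.IsHermitian) (f : ℝ → ℝ) : matFun f A ∈ Algebra.adjoin ℝ {A} := by
  obtain ⟨P, -, hP⟩ := exists_polynomial_matFun_eq_aeval hA f ∅
  exact hP ▸ Polynomial.aeval_mem_adjoin_singleton ℝ A

lemma matFun_unitary_conj (hA : A.IsHermitian) (U : Matrix.unitaryGroup N ℂ) (f : ℝ → ℝ) :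
    matFun f ((U : Matrix N N ℂ) * A * star (U : Matrix N N ℂ)) =
      (U : Matrix N N ℂ) * matFun f A * star (U : Matrix N N ℂ) := by
  have hconj : ((U : Matrix N N ℂ) * A * star (U : Matrix N N ℂ)).IsHermitian :=
    Matrix.isHermitian_mul_mul_conjTranspose _ hA
  have hcont : Continuous (Unitary.conjStarAlgAut ℝ (Matrix N N ℂ) U) :=
    (continuous_const.matrix_mul continuous_id).matrix_mul continuous_const
  rw [matFun_eq_cfc hconj, matFun_eq_cfc hA]
  exact (StarAlgHomClass.map_cfc (Unitary.conjStarAlgAut ℝ (Matrix N N ℂ) U) f A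
    (A.finite_real_spectrum.continuousOn f) hcont hA.isSelfAdjoint hconj.isSelfAdjoint).symm

lemma exists_spectralResolution_mem_adjoin (hA : A.IsHermitian) :
    ∃ (J : Type) (_ : Fintype J) (p : J → Matrix N N ℂ) (a : J → ℝ), SpectralResolution p ∧
      A = ∑ j, a j • p j ∧ ∀ j, p j ∈ Algebra.adjoin ℝ {A} := by
  classical
  have := Fintype.ofFinite (spectrum ℝ A)
  let indicator (x u : ℝ) : ℝ := if u = x then 1 else 0
  have hcont (f : ℝ → ℝ) : ContinuousOn f (spectrum ℝ A) := A.finite_real_spectrum.continuousOn f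
  let p (x : spectrum ℝ A) : Matrix N N ℂ := cfc (indicator x) A
  have hmul (f g : ℝ → ℝ) : cfc f A * cfc g A = cfc (fun u => f u * g u) A :=
    (cfc_mul f g A (hcont f) (hcont g)).symm
  have hp : SpectralResolution p := by
    refine ⟨⟨⟨fun x => ?_, fun x y hxy => ?_⟩, ?_⟩, fun x => cfc_predicate _ A⟩
    · exact (hmul _ _).trans (cfc_congr fun u _ => by by_cases hu : u = x <;> simp [indicator, hu])
    · refine (hmul _ _).trans ((cfc_congr fun u _ => ?_).trans (cfc_const_zero ℝ A))
      have hne : (x : ℝ) ≠ y := Subtype.coe_injective.ne hxy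
      by_cases hu : u = x <;> simp [indicator, hu, hne]
    · rw [← cfc_sum_univ _ A fun x => hcont _, ← cfc_const_one ℝ A hA.isSelfAdjoint]
      refine cfc_congr fun u hu => ?_
      rw [Finset.sum_apply, Finset.sum_eq_single ⟨u, hu⟩ (fun x _ hx => if_neg ?_) (by simp)]
      · simp
      · exact fun h => hx (Subtype.ext h.symm)
  refine ⟨spectrum ℝ A, inferInstance, p, (↑), hp, hp.eq_sum_smul fun x => ?_, fun x => ?_⟩
  · calc A * p x = cfc (fun u => u * indicator x u) A := by
          rw [← hmul, cfc_id' ℝ A hA.isSelfAdjoint]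
      _ = cfc (fun u => x * indicator x u) A :=
          cfc_congr fun u _ => by by_cases hu : u = x <;> simp [indicator, hu]
      _ = (x : ℝ) • p x := cfc_const_mul _ _ A (hcont _)
  · have hpx : p x = matFun (indicator x) A := (matFun_eq_cfc hA _).symm
    exact hpx ▸ matFun_mem_adjoin hA _

/-- Each step refines the resolution reached so far by the spectral projections of one more
member of the family; the two commute because they lie in the algebra generated by the family. -/
lemma exists_spectralResolution_of_pairwise_commute {I : Type*} [Finite I] {x : I → Matrix N N ℂ}
    (hx : ∀ i, (x i).IsHermitian) (hcomm : ∀ i i', Commute (x i) (x i')) :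
    ∃ (J : Type) (_ : Fintype J) (p : J → Matrix N N ℂ) (a : I → J → ℝ), SpectralResolution p ∧
      (∀ i, x i = ∑ j, a i j • p j) ∧ ∀ j, p j ∈ Algebra.adjoin ℝ (Set.range x) := by
  classical
  suffices hfin : ∀ F : Finset I, ∃ (J : Type) (_ : Fintype J) (p : J → Matrix N N ℂ)
      (a : I → J → ℝ), SpectralResolution p ∧ (∀ i ∈ F, x i = ∑ j, a i j • p j) ∧
        ∀ j, p j ∈ Algebra.adjoin ℝ (Set.range x) by
    have := Fintype.ofFinite I
    obtain ⟨J, _, p, a, hp, hsum, hmem⟩ := hfin Finset.univ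
    exact ⟨J, _, p, a, hp, fun i => hsum i (Finset.mem_univ i), hmem⟩
  intro F
  induction F using Finset.induction_on with
  | empty =>
    exact ⟨Unit, inferInstance, fun _ => 1, fun _ _ => 0, .const_one, by simp, fun _ => one_mem _⟩
  | insert i F _ ih =>
    obtain ⟨J, _, p, a, hp, hsum, hmem⟩ := ih
    obtain ⟨K, _, q, b, hq, hxi, hqmem⟩ := exists_spectralResolution_mem_adjoin (hx i)
    have hpx (j : J) : Commute (p j) (x i) :=
      (Algebra.commute_of_mem_adjoin_of_forall_mem_commute (hmem j)
        (Set.forall_mem_range.2 fun i' => hcomm i i')).symm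
    have hpq (j : J) (k : K) : Commute (p j) (q k) :=
      Algebra.commute_of_mem_adjoin_singleton_of_commute (hqmem k) (hpx j)
    refine ⟨J × K, inferInstance, fun jk => p jk.1 * q jk.2,
      fun i' jk => if i' = i then b jk.2 else a i' jk.1, hp.prod hq hpq, fun i' hi' => ?_,
      fun jk => mul_mem (hmem jk.1) (Algebra.adjoin_mono (by simp) (hqmem jk.2))⟩
    by_cases hii : i' = i
    · subst hii
      simp only [if_true, Fintype.sum_prod_type, ← mul_smul_comm, ← Finset.mul_sum, ← hxi,
        ← Finset.sum_mul, hp.complete, one_mul]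
    · simp only [if_neg hii, Fintype.sum_prod_type, ← smul_mul_assoc, ← Finset.mul_sum,
        hq.complete, mul_one]
      exact hsum i' ((Finset.mem_insert.1 hi').resolve_left hii)

end FunctionalCalculus

section TraceOrder

open scoped Matrix.Norms.L2Operator

variable {N : Type*} [Fintype N] {A B C : Matrix N N ℂ}

lemma re_trace_nonneg (hA : A.PosSemidef) : 0 ≤ A.trace.re :=
  (Complex.nonneg_iff.1 hA.trace_nonneg).1

lemma re_trace_mul_nonneg (hA : A.PosSemidef) (hB : B.PosSemidef) : 0 ≤ (A * B).trace.re := by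
  classical
  obtain ⟨S, rfl⟩ := CStarAlgebra.nonneg_iff_eq_star_mul_self.mp hA.nonneg
  rw [mul_assoc, Matrix.trace_mul_comm]
  exact re_trace_nonneg (hB.mul_mul_conjTranspose_same S)

lemma re_trace_mul_le_re_trace_mul (hC : C.PosSemidef) (hAB : A ≤ B) :
    (C * A).trace.re ≤ (C * B).trace.re := by
  have hdiff := re_trace_mul_nonneg hC (Matrix.le_iff.1 hAB)
  rwa [mul_sub, Matrix.trace_sub, Complex.sub_re, sub_nonneg] at hdiff

omit [Fintype N] in
lemma smul_le_smul_of_posSemidef (hA : A.PosSemidef) {a b : ℝ} (hab : a ≤ b) : a • A ≤ b • A := by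
  rw [Matrix.le_iff, ← sub_smul]
  exact hA.smul (sub_nonneg.2 hab)

variable [DecidableEq N]

lemma le_re_trace_smul_one (hA : A.PosSemidef) : A ≤ A.trace.re • (1 : Matrix N N ℂ) := by
  rw [← Algebra.algebraMap_eq_smul_one]
  refine le_algebraMap_of_spectrum_le (fun x hx => ?_) hA.isHermitian.isSelfAdjoint
  obtain ⟨i, rfl⟩ := hA.isHermitian.spectrum_real_eq_range_eigenvalues ▸ hx
  rw [hA.isHermitian.trace_eq_sum_eigenvalues, Complex.re_sum]
  exact Finset.single_le_sum (f := hA.isHermitian.eigenvalues)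
    (fun j _ => hA.eigenvalues_nonneg j) (Finset.mem_univ i)

lemma le_smul_one_of_mul_self_eq_smul (hA : A.IsHermitian) {c : ℝ} (hc : 0 < c)
    (hAA : A * A = c • A) : A ≤ c • (1 : Matrix N N ℂ) := by
  set D := c • (1 : Matrix N N ℂ) - A
  have hD : Dᴴ = D := by simp [D, hA.eq]
  have hDD : D = c⁻¹ • (Dᴴ * D) := by
    rw [hD, eq_inv_smul_iff₀ hc.ne']
    simp [D, mul_sub, sub_mul, hAA, smul_sub]
  have hDpos : D.PosSemidef := by
    rw [hDD]
    exact (Matrix.posSemidef_conjTranspose_mul_self D).smul (inv_pos.2 hc).le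
  exact Matrix.le_iff.2 hDpos

end TraceOrder

section GroupAlgebra

variable {G N : Type*} [Group G] [Fintype N] [DecidableEq N]
  (π : G →* Matrix N N ℂ) (K L : Subgroup G)

/-- The image of the real group algebra `ℝ[K]` under the representation `π`. -/
def groupAlgebra : Subalgebra ℝ (Matrix N N ℂ) :=
  Algebra.adjoin ℝ (K.toSubmonoid.map π)

variable {π K L}

lemma map_mem_groupAlgebra {g : G} (hg : g ∈ K) : π g ∈ groupAlgebra π K :=
  Algebra.subset_adjoin ⟨g, hg, rfl⟩

lemma groupAlgebra_mono (hKL : K ≤ L) : groupAlgebra π K ≤ groupAlgebra π L :=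
  Algebra.adjoin_mono (Set.image_mono hKL)

lemma mem_groupAlgebra_iff_mem_span {x : Matrix N N ℂ} :
    x ∈ groupAlgebra π K ↔ x ∈ Submodule.span ℝ (K.toSubmonoid.map π : Set (Matrix N N ℂ)) := by
  rw [groupAlgebra, ← Subalgebra.mem_toSubmodule, Algebra.adjoin_eq_span, Submonoid.closure_eq]

/-- Linear properties of a group algebra may be checked on group elements. -/
lemma groupAlgebra_le_of_forall_mem {V : Submodule ℝ (Matrix N N ℂ)} (hV : ∀ g ∈ K, π g ∈ V)
    {x : Matrix N N ℂ} (hx : x ∈ groupAlgebra π K) : x ∈ V :=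
  Submodule.span_le.2 (Set.image_subset_iff.2 hV) (mem_groupAlgebra_iff_mem_span.1 hx)

lemma commute_of_mem_groupAlgebra {x y : Matrix N N ℂ} (hx : x ∈ groupAlgebra π K)
    (hy : ∀ g ∈ K, Commute (π g) y) : Commute x y := by
  refine (Algebra.commute_of_mem_adjoin_of_forall_mem_commute hx ?_).symm
  rintro _ ⟨g, hg, rfl⟩
  exact (hy g hg).symm

lemma conjTranspose_mem_groupAlgebra (hπ : ∀ g, (π g)ᴴ = π g⁻¹) {x : Matrix N N ℂ}
    (hx : x ∈ groupAlgebra π K) : xᴴ ∈ groupAlgebra π K := by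
  refine groupAlgebra_le_of_forall_mem (V := (groupAlgebra π K).toSubmodule.comap
    (starLinearEquiv ℝ (A := Matrix N N ℂ)).toLinearMap) (fun g hg => ?_) hx
  simpa [Matrix.star_eq_conjTranspose, hπ] using map_mem_groupAlgebra (inv_mem hg)

variable (π K) [Fintype K]

/-- The unnormalised twirl `x ↦ ∑ h ∈ K, π h * x * π h⁻¹`. -/
def conjSum : Matrix N N ℂ →ₗ[ℝ] Matrix N N ℂ :=
  ∑ h : K, LinearMap.mulLeftRight ℝ (π h, π (h : G)⁻¹)

/-- The average of `π (h ^ 2)` over `K`. On each isotypic component it is the Frobenius–Schur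
indicator divided by the dimension of the irreducible representation. -/
def squareMean : Matrix N N ℂ :=
  (Fintype.card K : ℝ)⁻¹ • ∑ h : K, π ((h : G) ^ 2)

variable {π K}

lemma conjSum_apply (x : Matrix N N ℂ) : conjSum π K x = ∑ h : K, π h * x * π (h : G)⁻¹ := by
  simp [conjSum]

lemma commute_conjSum (x : Matrix N N ℂ) {g : G} (hg : g ∈ K) :
    Commute (π g) (conjSum π K x) := by
  rw [Commute, SemiconjBy, conjSum_apply, Finset.mul_sum, Finset.sum_mul]
  refine Fintype.sum_equiv (Equiv.mulLeft (⟨g, hg⟩ : K)) _ _ fun h => ?_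
  simp only [Equiv.coe_mulLeft, Subgroup.coe_mul, mul_inv_rev, map_mul, mul_assoc]
  rw [← map_mul π g⁻¹, inv_mul_cancel, map_one, mul_one]

lemma conjSum_mem_groupAlgebra {x : Matrix N N ℂ} (hKL : K ≤ L) (hx : x ∈ groupAlgebra π L) :
    conjSum π K x ∈ groupAlgebra π L := by
  rw [conjSum_apply]
  exact sum_mem fun h _ => mul_mem (mul_mem (map_mem_groupAlgebra (hKL h.2)) hx)
    (map_mem_groupAlgebra (hKL (inv_mem h.2)))

lemma conjSum_conj (x : Matrix N N ℂ) {g : G} (hg : g ∈ K) :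
    conjSum π K (π g * x * π g⁻¹) = conjSum π K x := by
  simp only [conjSum_apply]
  refine Fintype.sum_equiv (Equiv.mulRight (⟨g, hg⟩ : K)) _ _ fun h => ?_
  simp [mul_assoc]

lemma conjSum_mul_of_commute (x : Matrix N N ℂ) {y : Matrix N N ℂ}
    (hy : ∀ g ∈ K, Commute (π g) y) : conjSum π K x * y = conjSum π K (x * y) := by
  simp only [conjSum_apply, Finset.sum_mul]
  refine Finset.sum_congr rfl fun h _ => ?_
  simp only [mul_assoc, (hy _ (inv_mem h.2)).eq]

lemma re_trace_mul_conjSum {M : Matrix N N ℂ} (hM : ∀ g ∈ K, Commute (π g) M)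
    (x : Matrix N N ℂ) :
    (M * conjSum π K x).trace.re = Fintype.card K * (M * x).trace.re := by
  have hterm (h : K) : (M * (π h * x * π (h : G)⁻¹)).trace = (M * x).trace := by
    have hcomm : M * (π h * x * π (h : G)⁻¹) = π h * (M * x) * π (h : G)⁻¹ := by
      simp only [← mul_assoc, (hM _ h.2).eq]
    rw [hcomm, Matrix.trace_mul_cycle, ← map_mul, inv_mul_cancel, map_one, one_mul]
  simp only [conjSum_apply, Finset.mul_sum, Matrix.trace_sum, hterm, Finset.sum_const,
    Finset.card_univ, nsmul_eq_mul]
  exact Complex.re_ofReal_mul (Fintype.card K) _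

lemma commute_squareMean {g : G} (hg : g ∈ K) : Commute (π g) (squareMean π K) := by
  refine Commute.smul_right ?_ _
  rw [Commute, SemiconjBy, Finset.mul_sum, Finset.sum_mul]
  refine Fintype.sum_equiv (MulAut.conj (⟨g, hg⟩ : K)).toEquiv _ _ fun h => ?_
  simp [pow_two, ← map_mul, mul_assoc]

lemma squareMean_mem_groupAlgebra : squareMean π K ∈ groupAlgebra π K :=
  Subalgebra.smul_mem _ (sum_mem fun h _ => map_mem_groupAlgebra (pow_mem h.2 2)) _

variable (hπ : ∀ g, (π g)ᴴ = π g⁻¹)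

include hπ

lemma conjTranspose_conjSum (x : Matrix N N ℂ) : (conjSum π K x)ᴴ = conjSum π K xᴴ := by
  simp only [conjSum_apply, Matrix.conjTranspose_sum, Matrix.conjTranspose_mul, hπ, inv_inv,
    mul_assoc]

lemma posSemidef_conjSum {x : Matrix N N ℂ} (hx : x.PosSemidef) : (conjSum π K x).PosSemidef := by
  rw [conjSum_apply]
  refine Matrix.posSemidef_sum _ fun h _ => ?_
  rw [← hπ]
  exact hx.mul_mul_conjTranspose_same _

/-- Averaging over `K` identifies `g` with `g⁻¹`, that is, `π g` with its adjoint. -/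
lemma isHermitian_conjSum {x : Matrix N N ℂ}
    (hconj : ∀ g ∈ L, ∃ k ∈ K, k * g * k⁻¹ = g⁻¹) (hx : x ∈ groupAlgebra π L) :
    (conjSum π K x).IsHermitian := by
  refine groupAlgebra_le_of_forall_mem (V := LinearMap.eqLocus
    ((starLinearEquiv ℝ (A := Matrix N N ℂ)).toLinearMap ∘ₗ conjSum π K) (conjSum π K))
    (fun g hg => ?_) hx
  obtain ⟨k, hk, hkg⟩ := hconj g hg
  calc (conjSum π K (π g))ᴴ = conjSum π K (π (k * g * k⁻¹)) := by
        rw [conjTranspose_conjSum hπ, hπ, hkg]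
    _ = conjSum π K (π g) := by rw [map_mul π, map_mul π, conjSum_conj _ hk]

end GroupAlgebra

section PrimitiveResolution

variable {G N J : Type*} [Group G] [Fintype N] [DecidableEq N] [Fintype J]
  {π : G →* Matrix N N ℂ} {K L : Subgroup G} {q : J → Matrix N N ℂ}

/-- A resolution of the identity into absolutely primitive idempotents of the real group algebra of
`K`: the corner `q j * groupAlgebra π K * q j` consists of the real multiples of `q j`. -/
structure PrimitiveResolution (π : G →* Matrix N N ℂ) (K : Subgroup G) (q : J → Matrix N N ℂ) :
    Prop extends SpectralResolution q where
  mem : ∀ j, q j ∈ groupAlgebra π K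
  exists_corner_eq_smul : ∀ j, ∀ x ∈ groupAlgebra π K, ∃ a : ℝ, q j * x * q j = a • q j

lemma primitiveResolution_bot [Unique J] :
    PrimitiveResolution π ⊥ (fun _ : J => (1 : Matrix N N ℂ)) where
  toSpectralResolution := .const_one
  mem _ := one_mem _
  exists_corner_eq_smul _ x hx := by
    refine groupAlgebra_le_of_forall_mem (V := {
      carrier := {x | ∃ a : ℝ, 1 * x * 1 = a • (1 : Matrix N N ℂ)}
      add_mem' := ?_
      zero_mem' := ⟨0, by simp⟩
      smul_mem' := ?_ }) (fun g hg => ?_) hx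
    · rintro x y ⟨a, ha⟩ ⟨b, hb⟩
      exact ⟨a + b, by rw [mul_add, add_mul, ha, hb, add_smul]⟩
    · rintro c x ⟨a, ha⟩
      exact ⟨c * a, by rw [mul_smul_comm, smul_mul_assoc, ha, smul_smul]⟩
    · exact ⟨1, by simp [Subgroup.mem_bot.1 hg]⟩

namespace PrimitiveResolution

variable (hq : PrimitiveResolution π K q) (hπ : ∀ g, (π g)ᴴ = π g⁻¹)

include hq

lemma commute {y : Matrix N N ℂ} (hy : ∀ g ∈ K, Commute (π g) y) (j : J) : Commute (q j) y :=
  commute_of_mem_groupAlgebra (hq.mem j) hy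

include hπ

lemma exists_corner_coeff (i : J) :
    ∃ α : K → ℝ, (∀ h : K, q i * π h * q i = α h • q i) ∧
      (∀ h : K, q i * π (h : G)⁻¹ * q i = α h • q i) ∧ α 1 ≠ 0 := by
  by_cases hi : q i = 0
  · exact ⟨1, by simp [hi], by simp [hi], one_ne_zero⟩
  choose α hα using fun h : K => hq.exists_corner_eq_smul i (π h) (map_mem_groupAlgebra h.2)
  refine ⟨α, hα, fun h => ?_, fun h1 => hi ?_⟩
  · have hstar := congrArg Matrix.conjTranspose (hα h)
    simpa [hπ, (hq.isHermitian i).eq, mul_assoc] using hstar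
  · simpa [h1, hq.mul_self] using hα 1

/-- Schur's lemma for corners: `q i * groupAlgebra π K * q k` is at most one-dimensional. -/
lemma exists_mixed_corner_eq_smul {i k : J} {w : Matrix N N ℂ} (hw : w ∈ groupAlgebra π K)
    (hne : q i * w * q k ≠ 0) {x : Matrix N N ℂ} (hx : x ∈ groupAlgebra π K) :
    ∃ a : ℝ, q i * x * q k = a • (q i * w * q k) := by
  obtain ⟨c, hc⟩ := hq.exists_corner_eq_smul k (wᴴ * q i * w)
    (mul_mem (mul_mem (conjTranspose_mem_groupAlgebra hπ hw) (hq.mem i)) hw)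
  obtain ⟨a, ha⟩ := hq.exists_corner_eq_smul i (x * q k * wᴴ)
    (mul_mem (mul_mem hx (hq.mem k)) (conjTranspose_mem_groupAlgebra hπ hw))
  have hgram : (q i * w * q k)ᴴ * (q i * w * q k) = c • q k := by
    rw [← hc]
    simp only [Matrix.conjTranspose_mul, (hq.isHermitian _).eq, mul_assoc]
    rw [← mul_assoc (q i) (q i), hq.mul_self]
  have hc0 : c ≠ 0 := by
    rintro rfl
    exact hne (Matrix.conjTranspose_mul_self_eq_zero.1 (hgram.trans (zero_smul ℝ _)))
  refine ⟨c⁻¹ * a, ?_⟩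
  rw [mul_smul, eq_inv_smul_iff₀ hc0]
  calc c • (q i * x * q k) = q i * x * (c • q k) := (mul_smul_comm ..).symm
    _ = (q i * (x * q k * wᴴ) * q i) * (w * q k) := by
        rw [← hc]
        simp only [mul_assoc]
    _ = a • (q i * w * q k) := by rw [ha, smul_mul_assoc, ← mul_assoc]

lemma exists_mixed_corner_coeff (i k : J) :
    ∃ (w : Matrix N N ℂ) (β : K → ℝ), w = q i * w * q k ∧
      (∀ h : K, q i * π h * q k = β h • w) ∧ ∀ h : K, q k * π h * q i = β h⁻¹ • wᴴ := by
  by_cases hall : ∀ h : K, q i * π h * q k = 0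
  · refine ⟨0, 0, by simp, by simp [hall], fun h => ?_⟩
    have hstar := congrArg Matrix.conjTranspose (hall h⁻¹)
    simpa [hπ, (hq.isHermitian _).eq, mul_assoc] using hstar
  obtain ⟨g, hg⟩ := not_forall.1 hall
  choose β hβ using fun h : K => hq.exists_mixed_corner_eq_smul hπ
    (map_mem_groupAlgebra g.2) hg (map_mem_groupAlgebra h.2)
  refine ⟨q i * π g * q k, β, ?_, hβ, fun h => ?_⟩
  · simp only [← mul_assoc, hq.mul_self]
    rw [mul_assoc _ (q k), hq.mul_self]
  · have hstar := congrArg Matrix.conjTranspose (hβ h⁻¹)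
    simpa [hπ, (hq.isHermitian _).eq, mul_assoc] using hstar

variable [Fintype K]

/-- The sum is `s • (w * wᴴ)`, where `w` spans the corner `q i * groupAlgebra π K * q k`; the same
scalar satisfies `q i * conjSum π K wᴴ * q k = s • (w * wᴴ * w)`, and the left-hand side vanishes
because `conjSum` commutes with `q i`. -/
lemma sum_corner_mul_corner_eq_zero {i k : J} (hik : i ≠ k) :
    ∑ h : K, q i * π h * q k * (q k * π h * q i) = 0 := by
  obtain ⟨w, β, hw, hβ, hβstar⟩ := hq.exists_mixed_corner_coeff hπ i k
  by_cases hw0 : w = 0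
  · simp [hβ, hw0]
  have hwstar : wᴴ = q k * wᴴ * q i := by
    conv_lhs => rw [hw, Matrix.conjTranspose_mul, Matrix.conjTranspose_mul,
      (hq.isHermitian _).eq, (hq.isHermitian _).eq, ← mul_assoc]
  have hvanish : q i * conjSum π K wᴴ * q k = 0 := by
    rw [(hq.commute (fun g hg => commute_conjSum _ hg) i).eq, mul_assoc, hq.ortho hik, mul_zero]
  have htwirl : q i * conjSum π K wᴴ * q k = (∑ h : K, β h * β h⁻¹) • (w * wᴴ * w) := by
    rw [conjSum_apply, Finset.mul_sum, Finset.sum_mul, Finset.sum_smul]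
    refine Finset.sum_congr rfl fun h _ => ?_
    calc q i * (π h * wᴴ * π (h : G)⁻¹) * q k
        = q i * π h * q k * wᴴ * (q i * π ((h⁻¹ : K) : G) * q k) := by
          conv_lhs => rw [hwstar]
          simp only [mul_assoc, Subgroup.coe_inv]
      _ = (β h * β h⁻¹) • (w * wᴴ * w) := by
          rw [hβ, hβ, smul_mul_assoc, smul_mul_smul_comm]
  have hcube : w * wᴴ * w ≠ 0 := by
    rwa [Ne, Matrix.self_mul_conjTranspose_mul_eq_zero, Matrix.conjTranspose_mul_self_eq_zero]
  simp only [hβ, hβstar, smul_mul_smul_comm, ← Finset.sum_smul]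
  rw [(smul_eq_zero.1 (htwirl.symm.trans hvanish)).resolve_right hcube, zero_smul]

lemma exists_twirl_coeff (i : J) : ∃ c : ℝ, 0 < c ∧
    (∀ x, q i * conjSum π K (q i * x * q i) * q i = c • (q i * x * q i)) ∧
    q i * squareMean π K * q i = (c / Fintype.card K) • q i := by
  obtain ⟨α, hα, hα', hα1⟩ := hq.exists_corner_coeff hπ i
  refine ⟨∑ h, α h ^ 2,
    Finset.sum_pos' (fun h _ => sq_nonneg _) ⟨1, Finset.mem_univ _, by positivity⟩,
    fun x => ?_, ?_⟩
  · rw [conjSum_apply, Finset.mul_sum, Finset.sum_mul, Finset.sum_smul]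
    refine Finset.sum_congr rfl fun h _ => ?_
    calc q i * (π h * (q i * x * q i) * π (h : G)⁻¹) * q i
        = (q i * π h * q i) * x * (q i * π (h : G)⁻¹ * q i) := by simp only [mul_assoc]
      _ = α h ^ 2 • (q i * x * q i) := by
          rw [hα, hα', smul_mul_assoc, smul_mul_smul_comm, pow_two]
  · have hsq : q i * (∑ h : K, π ((h : G) ^ 2)) * q i =
        ∑ k, ∑ h : K, q i * π h * q k * (q k * π h * q i) := by
      rw [Finset.sum_comm, Finset.mul_sum, Finset.sum_mul]
      refine Finset.sum_congr rfl fun h _ => ?_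
      calc q i * π ((h : G) ^ 2) * q i = q i * π h * (∑ k, q k) * (π h * q i) := by
            rw [hq.complete, mul_one, pow_two, map_mul]
            simp only [mul_assoc]
        _ = _ := by
            rw [Finset.mul_sum, Finset.sum_mul]
            refine Finset.sum_congr rfl fun k _ => ?_
            simp only [← mul_assoc]
            rw [mul_assoc _ (q k) (q k), hq.mul_self]
    rw [squareMean, mul_smul_comm, smul_mul_assoc, hsq, Finset.sum_eq_single i
      (fun k _ hk => hq.sum_corner_mul_corner_eq_zero hπ hk.symm) (by simp)]
    simp only [hα, smul_mul_smul_comm, hq.mul_self, ← Finset.sum_smul, smul_smul]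
    simp only [← pow_two, div_eq_inv_mul]

end PrimitiveResolution

lemma exists_spectralResolution_centralizer [Finite L] [Fintype K] (hKL : K ≤ L)
    (hπ : ∀ g, (π g)ᴴ = π g⁻¹) (hconj : ∀ g ∈ L, ∃ k ∈ K, k * g * k⁻¹ = g⁻¹) :
    ∃ (I : Type) (_ : Fintype I) (p : I → Matrix N N ℂ), SpectralResolution p ∧
      (∀ i, p i ∈ groupAlgebra π L) ∧ (∀ i, ∀ g ∈ K, Commute (π g) (p i)) ∧
      ∀ x ∈ groupAlgebra π L, ∃ b : I → ℝ, conjSum π K x = ∑ i, b i • p i := by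
  have hmemL {x : Matrix N N ℂ} (hx : x ∈ groupAlgebra π L) : conjSum π K x ∈ groupAlgebra π L :=
    conjSum_mem_groupAlgebra hKL hx
  have hcomm (g g' : L) : Commute (conjSum π K (π g)) (conjSum π K (π g')) := by
    have hg := map_mem_groupAlgebra (π := π) g.2
    have hg' := map_mem_groupAlgebra (π := π) g'.2
    have hmul : conjSum π K (π g) * conjSum π K (π g') =
        conjSum π K (π g * conjSum π K (π g')) :=
      conjSum_mul_of_commute _ fun k hk => commute_conjSum _ hk
    have hherm : (conjSum π K (π g) * conjSum π K (π g')).IsHermitian :=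
      hmul ▸ isHermitian_conjSum hπ hconj (mul_mem hg (hmemL hg'))
    exact ((isHermitian_conjSum hπ hconj hg).commute_iff
      (isHermitian_conjSum hπ hconj hg')).2 hherm
  obtain ⟨I, _, p, a, hp, hsum, hmem⟩ := exists_spectralResolution_of_pairwise_commute
    (fun g : L => isHermitian_conjSum hπ hconj (map_mem_groupAlgebra g.2)) hcomm
  refine ⟨I, inferInstance, p, hp, fun i => ?_, fun i k hk => ?_, fun x hx => ?_⟩
  · refine Algebra.adjoin_le (Set.range_subset_iff.2 fun g => ?_) (hmem i)
    exact hmemL (map_mem_groupAlgebra g.2)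
  · exact Algebra.commute_of_mem_adjoin_of_forall_mem_commute (hmem i)
      (Set.forall_mem_range.2 fun g => commute_conjSum _ hk)
  · have hspan : conjSum π K x ∈ Submodule.span ℝ (Set.range p) := by
      refine groupAlgebra_le_of_forall_mem
        (V := (Submodule.span ℝ (Set.range p)).comap (conjSum π K)) (fun g hg => ?_) hx
      exact (Submodule.mem_span_range_iff_exists_fun ℝ).2 ⟨a ⟨g, hg⟩, (hsum ⟨g, hg⟩).symm⟩
    obtain ⟨b, hb⟩ := (Submodule.mem_span_range_iff_exists_fun ℝ).1 hspan
    exact ⟨b, hb.symm⟩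

/-- One branching step of the Gelfand–Tsetlin construction. -/
lemma exists_primitiveResolution_of_le [Finite L] (hKL : K ≤ L) (hπ : ∀ g, (π g)ᴴ = π g⁻¹)
    (hconj : ∀ g ∈ L, ∃ k ∈ K, k * g * k⁻¹ = g⁻¹)
    (hK : ∃ (J : Type) (_ : Fintype J) (q : J → Matrix N N ℂ), PrimitiveResolution π K q) :
    ∃ (J : Type) (_ : Fintype J) (q : J → Matrix N N ℂ), PrimitiveResolution π L q := by
  obtain ⟨J, _, q, hq⟩ := hK
  have : Finite K := Finite.of_injective _ (Subgroup.inclusion_injective hKL)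
  have := Fintype.ofFinite K
  obtain ⟨I, _, p, hp, hpL, hpK, hcent⟩ := exists_spectralResolution_centralizer hKL hπ hconj
  have hqp (j : J) (i : I) : Commute (q j) (p i) := hq.commute (hpK i) j
  have hqL (j : J) : q j ∈ groupAlgebra π L := groupAlgebra_mono hKL (hq.mem j)
  refine ⟨J × I, inferInstance, fun ji => q ji.1 * p ji.2, hq.toSpectralResolution.prod hp hqp,
    fun ji => mul_mem (hqL _) (hpL _), ?_⟩
  rintro ⟨j, i⟩ x hx
  obtain ⟨c, hc, htwirl, -⟩ := hq.exists_twirl_coeff hπ j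
  obtain ⟨b, hb⟩ := hcent (q j * x * q j) (mul_mem (mul_mem (hqL j) hx) (hqL j))
  refine ⟨c⁻¹ * b i, ?_⟩
  rw [mul_smul, eq_inv_smul_iff₀ hc.ne']
  calc c • (q j * p i * x * (q j * p i)) = p i * (c • (q j * x * q j)) * p i := by
        rw [(hqp j i).eq, mul_smul_comm, smul_mul_assoc, ← (hqp j i).eq]
        simp only [mul_assoc, (hqp j i).eq]
    _ = b i • (q j * p i) := by
        have hqS : Commute (q j) (∑ i, b i • p i) :=
          .sum_right _ _ _ fun i _ => (hqp j i).smul_right _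
        rw [← htwirl, hb, hqS.eq, mul_assoc _ (q j), hq.mul_self, ← mul_assoc, hp.mul_sum_smul,
          smul_mul_assoc, smul_mul_assoc, ← (hqp j i).eq, mul_assoc, hp.mul_self]

/-- With `P = conjSum π K (q i)` one has `P * P = c • P`, hence `P ≤ c • 1`. -/
lemma PrimitiveResolution.card_mul_re_trace_mul_le [Fintype K] (hq : PrimitiveResolution π K q)
    (hπ : ∀ g, (π g)ᴴ = π g⁻¹) {M : Matrix N N ℂ} (hM : M.PosSemidef)
    (hMK : ∀ g ∈ K, Commute (π g) M) {i : J} {c : ℝ} (hc : 0 < c)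
    (hqc : q i * conjSum π K (q i) * q i = c • q i) :
    Fintype.card K * (M * q i).trace.re ≤ c * M.trace.re := by
  have hcomm (g : G) (hg : g ∈ K) : Commute (π g) (conjSum π K (q i)) := commute_conjSum _ hg
  have hqP : q i * conjSum π K (q i) = c • q i := by
    rw [← hqc, mul_assoc, ← (hq.commute hcomm i).eq, ← mul_assoc, hq.mul_self]
  have hPP : conjSum π K (q i) * conjSum π K (q i) = c • conjSum π K (q i) := by
    rw [conjSum_mul_of_commute _ hcomm, hqP, map_smul]
  have hP : conjSum π K (q i) ≤ c • (1 : Matrix N N ℂ) :=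
    le_smul_one_of_mul_self_eq_smul (posSemidef_conjSum hπ (hq.posSemidef i)).isHermitian hc hPP
  have htrace := re_trace_mul_le_re_trace_mul hM hP
  rwa [re_trace_mul_conjSum hMK, mul_smul_comm, mul_one, Matrix.trace_smul,
    Complex.smul_re, smul_eq_mul] at htrace

lemma PrimitiveResolution.le_re_trace_smul_squareMean [Fintype K]
    (hq : PrimitiveResolution π K q) (hπ : ∀ g, (π g)ᴴ = π g⁻¹) {M : Matrix N N ℂ}
    (hM : M.PosSemidef) (hMK : ∀ g ∈ K, Commute (π g) M) :
    M ≤ M.trace.re • squareMean π K := by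
  suffices hblock : ∀ i, M * q i ≤ M.trace.re • (squareMean π K * q i) by
    simpa only [← Finset.smul_sum, ← Finset.mul_sum, hq.complete, mul_one] using
      Finset.sum_le_sum fun i (_ : i ∈ Finset.univ) => hblock i
  intro i
  obtain ⟨c, hc, htwirl, hsq⟩ := hq.exists_twirl_coeff hπ i
  have hcard : (0 : ℝ) < Fintype.card K := mod_cast Fintype.card_pos
  have hqc : q i * conjSum π K (q i) * q i = c • q i := by
    simpa only [mul_one, hq.mul_self] using htwirl 1
  have hcorner : M * q i = q i * M * q i := by
    rw [(hq.commute hMK i).eq, mul_assoc, hq.mul_self]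
  have hMq : (M * q i).PosSemidef := by
    simpa only [hcorner, (hq.isHermitian i).eq] using hM.conjTranspose_mul_mul_same (q i)
  have hsqq : squareMean π K * q i = (c / Fintype.card K) • q i := by
    rw [← hsq, (hq.commute (fun g hg => commute_squareMean hg) i).eq, mul_assoc, hq.mul_self]
  calc M * q i = (q i)ᴴ * (M * q i) * q i := by
        rw [(hq.isHermitian i).eq, hcorner]
        simp only [← mul_assoc, hq.mul_self]
        rw [mul_assoc _ (q i), hq.mul_self]
    _ ≤ (q i)ᴴ * ((M * q i).trace.re • 1) * q i :=
        star_left_conjugate_le_conjugate (le_re_trace_smul_one hMq) (q i)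
    _ = (M * q i).trace.re • q i := by
        rw [mul_smul_comm, mul_one, smul_mul_assoc, (hq.isHermitian i).eq, hq.mul_self]
    _ ≤ (M.trace.re * (c / Fintype.card K)) • q i := by
        refine smul_le_smul_of_posSemidef (hq.posSemidef i) ?_
        rw [← mul_div_assoc, le_div_iff₀ hcard, mul_comm, mul_comm M.trace.re]
        exact hq.card_mul_re_trace_mul_le hπ hM hMK hc hqc
    _ = M.trace.re • (squareMean π K * q i) := by rw [hsqq, smul_smul]

end PrimitiveResolution

section Permutations

/-- Reversing every cycle around a base point, chosen to be `k` on the cycle of `k`, inverts `g`. -/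
lemma exists_conj_eq_inv_fixing {α : Type*} (g : Equiv.Perm α) (k : α) :
    ∃ a : Equiv.Perm α, a * g * a⁻¹ = g⁻¹ ∧ a k = k ∧ ∀ p, ∃ i : ℤ, a p = (g ^ i) p := by
  classical
  let base (p : α) : α :=
    if g.SameCycle k p then k else (Quotient.mk (Equiv.Perm.SameCycle.setoid g) p).out
  have hbase_same (p : α) : g.SameCycle (base p) p := by
    by_cases h : g.SameCycle k p
    · simpa only [base, if_pos h] using h
    · simp only [base, if_neg h]
      exact Quotient.mk_out (s := Equiv.Perm.SameCycle.setoid g) p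
  have hbase_congr {p q : α} (h : g.SameCycle p q) : base p = base q := by
    have hk : g.SameCycle k p ↔ g.SameCycle k q := ⟨(·.trans h), (·.trans h.symm)⟩
    have hquot : Quotient.mk (Equiv.Perm.SameCycle.setoid g) p = Quotient.mk _ q := Quotient.sound h
    simp only [base, hk, hquot]
  choose i hi using hbase_same
  let reflect (p : α) : α := (g ^ (-i p)) (base p)
  have hreflect {p : α} {j : ℤ} (hj : (g ^ j) (base p) = p) : reflect p = (g ^ (-j)) (base p) := by
    have hpow : (g ^ (-i p - j)) ((g ^ i p) (base p)) = (g ^ (-i p - j)) ((g ^ j) (base p)) := by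
      rw [hi, hj]
    simp only [← Equiv.Perm.mul_apply, ← zpow_add] at hpow
    rw [show -i p - j + i p = -j by ring, show -i p - j + j = -i p by ring] at hpow
    exact hpow.symm
  have hsame (p : α) : g.SameCycle p (reflect p) :=
    Equiv.Perm.SameCycle.trans (Equiv.Perm.SameCycle.symm ⟨i p, hi p⟩) ⟨-i p, rfl⟩
  have hinv : Function.Involutive reflect := fun p => by
    have hb : base (reflect p) = base p := hbase_congr (hsame p).symm
    rw [hreflect (j := -i p) (by rw [hb]), hb, neg_neg, hi]
  refine ⟨hinv.toPerm, ?_, ?_, fun p => ?_⟩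
  · rw [mul_inv_eq_iff_eq_mul]
    ext p
    have hb : base (g p) = base p := hbase_congr (Equiv.Perm.sameCycle_apply_left.2 (.refl _ _))
    have hgp := hreflect (p := g p) (j := 1 + i p)
      (by rw [hb, zpow_add, zpow_one, Equiv.Perm.mul_apply, hi])
    rw [hb, neg_add, zpow_add, zpow_neg_one, Equiv.Perm.mul_apply] at hgp
    exact hgp
  · have hb : base k = k := if_pos (Equiv.Perm.SameCycle.refl g k)
    simpa [hb] using hreflect (p := k) (j := 0) (by simp [hb])
  · obtain ⟨j, hj⟩ := hsame p
    exact ⟨j, hj.symm⟩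

/-- The permutations of the positions of the word `z` that leave it unchanged. -/
def wordStabilizer {α β : Type*} (z : α → β) : Subgroup (Equiv.Perm α) where
  carrier := {g | z ∘ g = z}
  mul_mem' {g h} hg hh := by
    rw [Set.mem_ofPred_eq] at *
    rw [Equiv.Perm.coe_mul, ← Function.comp_assoc, hg, hh]
  one_mem' := rfl
  inv_mem' {g} hg := by
    rw [Set.mem_ofPred_eq] at *
    nth_rw 1 [← hg]
    ext
    simp

lemma mem_wordStabilizer {α β : Type*} {z : α → β} {g : Equiv.Perm α} :
    g ∈ wordStabilizer z ↔ z ∘ g = z :=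
  Iff.rfl

instance {α β : Type*} [Fintype α] [DecidableEq β] (z : α → β) :
    DecidablePred (· ∈ wordStabilizer z) :=
  fun g => inferInstanceAs (Decidable (z ∘ g = z))

lemma wordStabilizer_pair_le {α β γ : Type*} (z : α → β) (w : α → γ) :
    wordStabilizer (fun k => (z k, w k)) ≤ wordStabilizer z :=
  fun _ hg => funext fun k => congrArg Prod.fst (congrFun hg k)

lemma conj_mem_wordStabilizer_iff {α β : Type*} (z : α → β) (g h : Equiv.Perm α) :
    h ∈ wordStabilizer z ↔ g * h * g⁻¹ ∈ wordStabilizer (z ∘ (g⁻¹ : Equiv.Perm α)) := by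
  simp only [mem_wordStabilizer, funext_iff]
  exact ⟨fun hh p => by simpa using hh (g⁻¹ p), fun hh p => by simpa using hh (g p)⟩

end Permutations

section PermutationRepresentation

variable (α D : Type*) [Fintype α] [DecidableEq α] [Fintype D] [DecidableEq D]

/-- The representation of the permutations of `α` on the tensor power `(ℂ^D)^{⊗α}` by permutation
of the tensor factors; its matrices are indexed by the words `α → D`. -/
def permRep : Equiv.Perm α →* Matrix (α → D) (α → D) ℂ where
  toFun g := Equiv.Perm.permMatrix ℂ (g.symm.arrowCongr (.refl D))
  map_one' := Matrix.permMatrix_one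
  map_mul' g h :=
    Matrix.permMatrix_mul (h.symm.arrowCongr (.refl D)) (g.symm.arrowCongr (.refl D))

variable {α D}

lemma permRep_apply (g : Equiv.Perm α) (i j : α → D) :
    permRep α D g i j = if i ∘ g = j then 1 else 0 :=
  (PEquiv.toMatrix_apply _ _ _).trans (if_congr (by simp [eq_comm]; rfl) rfl rfl)

lemma conjTranspose_permRep (g : Equiv.Perm α) : (permRep α D g)ᴴ = permRep α D g⁻¹ :=
  Matrix.conjTranspose_permMatrix (R := ℂ) (g.symm.arrowCongr (.refl D))

lemma permRep_conj (g : Equiv.Perm α) (A : Matrix (α → D) (α → D) ℂ) :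
    permRep α D g * A * permRep α D g⁻¹ = A.submatrix (· ∘ g) (· ∘ g) := by
  let e : (α → D) ≃ (α → D) := g.symm.arrowCongr (.refl D)
  have hleft : permRep α D g * A = A.submatrix e id := PEquiv.toMatrix_toPEquiv_mul e A
  have hright (B : Matrix (α → D) (α → D) ℂ) : B * permRep α D g⁻¹ = B.submatrix id e :=
    PEquiv.mul_toMatrix_toPEquiv B e.symm
  rw [hleft, hright]
  rfl

lemma permRep_conj_tensorFam (g : Equiv.Perm α) (ρ : α → Matrix D D ℂ) :
    permRep α D g * tensorFam ρ * permRep α D g⁻¹ = tensorFam (ρ ∘ (g⁻¹ : Equiv.Perm α)) := by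
  rw [permRep_conj]
  ext i j
  exact Fintype.prod_equiv g _ _ fun k => by simp

lemma commute_permRep_iff {g : Equiv.Perm α} {A : Matrix (α → D) (α → D) ℂ} :
    Commute (permRep α D g) A ↔ permRep α D g * A * permRep α D g⁻¹ = A := by
  have hinv : permRep α D g⁻¹ * permRep α D g = 1 := by rw [← map_mul, inv_mul_cancel, map_one]
  have hinv' : permRep α D g * permRep α D g⁻¹ = 1 := by rw [← map_mul, mul_inv_cancel, map_one]
  refine ⟨fun h => by rw [h.eq, mul_assoc, hinv', mul_one], fun h => ?_⟩
  rw [commute_iff_eq]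
  nth_rw 2 [← h]
  rw [mul_assoc _ _ (permRep α D g), hinv, mul_one]

variable {β : Type*}

lemma commute_permRep_tensorFam {z : α → β} (ρ : β → Matrix D D ℂ) {g : Equiv.Perm α}
    (hg : g ∈ wordStabilizer z) : Commute (permRep α D g) (tensorFam fun k => ρ (z k)) := by
  have hz : z ∘ (g⁻¹ : Equiv.Perm α) = z := inv_mem hg
  rw [commute_permRep_iff, permRep_conj_tensorFam]
  exact congrArg (fun w => tensorFam (ρ ∘ w)) hz

/-- The chain of subgroups is obtained by letting one more position move at a time. -/
lemma exists_primitiveResolution_wordStabilizer (z : α → β) :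
    ∃ (J : Type) (_ : Fintype J) (q : J → Matrix (α → D) (α → D) ℂ),
      PrimitiveResolution (permRep α D) (wordStabilizer z) q := by
  let K (F : Finset α) : Subgroup (Equiv.Perm α) :=
    wordStabilizer z ⊓ fixingSubgroup (Equiv.Perm α) ((F : Set α)ᶜ)
  have mem_K {F : Finset α} {g : Equiv.Perm α} :
      g ∈ K F ↔ g ∈ wordStabilizer z ∧ ∀ j ∉ F, g j = j := by
    simp [K, Subgroup.mem_inf, mem_fixingSubgroup_iff]
  suffices hF : ∀ F : Finset α, ∃ (J : Type) (_ : Fintype J) (q : J → Matrix (α → D) (α → D) ℂ),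
      PrimitiveResolution (permRep α D) (K F) q by
    have huniv : K Finset.univ = wordStabilizer z := by ext g; simp [mem_K]
    exact huniv ▸ hF Finset.univ
  intro F
  induction F using Finset.induction_on with
  | empty =>
    have hbot : K ∅ = ⊥ := by
      refine (Subgroup.eq_bot_iff_forall _).2 fun g hg => Equiv.ext fun j => ?_
      exact (mem_K.1 hg).2 j (Finset.notMem_empty j)
    exact ⟨Unit, inferInstance, fun _ => 1, hbot ▸ primitiveResolution_bot⟩
  | insert k F _ ih =>
    refine exists_primitiveResolution_of_le (fun g hg => ?_) conjTranspose_permRep ?_ ih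
    · exact mem_K.2 ⟨(mem_K.1 hg).1, fun j hj =>
        (mem_K.1 hg).2 j fun hjF => hj (Finset.mem_insert_of_mem hjF)⟩
    · intro g hg
      obtain ⟨hgz, hgfix⟩ := mem_K.1 hg
      obtain ⟨a, hag, hak, ha⟩ := exists_conj_eq_inv_fixing g k
      refine ⟨a, mem_K.2 ⟨funext fun p => ?_, fun j hj => ?_⟩, hag⟩
      · obtain ⟨i, hi⟩ := ha p
        rw [Function.comp_apply, hi]
        exact congrFun (zpow_mem hgz i) p
      · obtain rfl | hjk := eq_or_ne j k
        · exact hak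
        · obtain ⟨i, hi⟩ := ha j
          rw [hi]
          exact Equiv.Perm.zpow_apply_eq_self_of_apply_eq_self
            (hgfix j fun h => (Finset.mem_insert.1 h).elim hjk hj) i

variable [DecidableEq β]

variable (D) in
/-- The mean of the squares of the permutations fixing `z`. Up to its trace, it dominates every
state that these permutations leave invariant. -/
def wordSquareMean (z : α → β) : Matrix (α → D) (α → D) ℂ :=
  squareMean (permRep α D) (wordStabilizer z)

lemma le_re_trace_smul_wordSquareMean (z : α → β) {M : Matrix (α → D) (α → D) ℂ}
    (hM : M.PosSemidef) (hMz : ∀ g ∈ wordStabilizer z, Commute (permRep α D g) M) :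
    M ≤ M.trace.re • wordSquareMean D z := by
  obtain ⟨J, _, q, hq⟩ := exists_primitiveResolution_wordStabilizer (D := D) z
  exact hq.le_re_trace_smul_squareMean conjTranspose_permRep hM hMz

lemma commute_wordSquareMean {γ : Type*} [DecidableEq γ] {z : α → β} {w : α → γ}
    (hzw : wordStabilizer z ≤ wordStabilizer w) :
    Commute (wordSquareMean D z) (wordSquareMean D w) :=
  commute_of_mem_groupAlgebra squareMean_mem_groupAlgebra fun _ hg => commute_squareMean (hzw hg)

lemma posSemidef_wordSquareMean (z : α → β) : (wordSquareMean D z).PosSemidef := by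
  cases isEmpty_or_nonempty (α → D) with
  | inl h => exact Subsingleton.elim 0 (wordSquareMean D z) ▸ .zero
  | inr h =>
    have hone : (1 : Matrix (α → D) (α → D) ℂ) ≤
        (Fintype.card (α → D) : ℝ) • wordSquareMean D z := by
      simpa only [Matrix.trace_one, Complex.natCast_re] using
        le_re_trace_smul_wordSquareMean z (.one (n := α → D)) fun g _ => .one_right _
    have hcard : (0 : ℝ) < Fintype.card (α → D) := mod_cast Fintype.card_pos
    have hsmul := Matrix.nonneg_iff_posSemidef.1 (Matrix.PosSemidef.one.nonneg.trans hone)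
    simpa only [inv_smul_smul₀ hcard.ne'] using hsmul.smul (inv_nonneg.2 hcard.le)

lemma permRep_conj_wordSquareMean (z : α → β) (g : Equiv.Perm α) :
    permRep α D g * wordSquareMean D z * permRep α D g⁻¹ =
      wordSquareMean D (z ∘ (g⁻¹ : Equiv.Perm α)) := by
  let e : wordStabilizer z ≃ wordStabilizer (z ∘ (g⁻¹ : Equiv.Perm α)) :=
    (MulAut.conj g).toEquiv.subtypeEquiv (conj_mem_wordStabilizer_iff z g)
  rw [wordSquareMean, wordSquareMean, squareMean, squareMean, ← Fintype.card_congr e,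
    mul_smul_comm, smul_mul_assoc, Finset.mul_sum, Finset.sum_mul]
  refine congrArg _ (Fintype.sum_equiv e _ _ fun h => ?_)
  rw [← map_mul, ← map_mul]
  exact congrArg _ (conj_pow (a := g) (b := (h : Equiv.Perm α)) (i := 2)).symm

end PermutationRepresentation

section WordTypes

variable {α β C : Type*} [Fintype α] [DecidableEq C]

/-- The type (empirical count) of a word: the number of occurrences of each letter. -/
def wordType (w : α → C) (c : C) : ℕ :=
  Fintype.card {k // w k = c}

lemma exists_eq_comp_of_wordType_eq {v w : α → C} (h : wordType v = wordType w) :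
    ∃ τ : Equiv.Perm α, v = w ∘ τ := by
  let e (c : C) : {k // v k = c} ≃ {k // w k = c} := Fintype.equivOfCardEq (congrFun h c)
  exact ⟨Equiv.ofFiberEquiv e, funext fun k => (Equiv.ofFiberEquiv_map e k).symm⟩

lemma wordType_comp (w : α → C) (τ : Equiv.Perm α) : wordType (w ∘ τ) = wordType w :=
  funext fun _ => Fintype.card_congr (τ.subtypeEquiv fun _ => Iff.rfl)

lemma sum_wordType [Fintype C] (w : α → C) : ∑ c, wordType w c = Fintype.card α := by
  simp only [wordType, ← Fintype.card_sigma]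
  exact Fintype.card_congr (Equiv.sigmaFiberEquiv w)

variable [DecidableEq β]

lemma sum_wordType_pair [Fintype C] (z : α → β) (w : α → C) (b : β) :
    ∑ c, wordType (fun k => (z k, w k)) (b, c) = wordType z b := by
  simp only [wordType, Fintype.card_subtype, Prod.mk.injEq]
  rw [Finset.card_eq_sum_card_fiberwise (f := w) (t := Finset.univ) fun _ _ => Finset.mem_univ _]
  simp only [Finset.filter_filter]

lemma wordType_pair_apply_apply_of_comp_eq {z : α → β} {w : α → C} {h : Equiv.Perm α} {σ : C → C}
    (hσ : σ.Injective) (hz : h ∈ wordStabilizer z) (hw : w ∘ h = σ ∘ w) (b : β) (c : C) :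
    wordType (fun k => (z k, w k)) (b, σ c) = wordType (fun k => (z k, w k)) (b, c) := by
  nth_rw 1 [← wordType_comp _ h]
  refine Fintype.card_congr (Equiv.subtypeEquivRight fun k => ?_)
  simp only [Function.comp_apply, Prod.mk.injEq]
  rw [show z (h k) = z k from congrFun hz k, show w (h k) = σ (w k) from congrFun hw k, hσ.eq_iff]

lemma exists_representative_wordType_pair (z : α → β) :
    ∃ (r : (α → C) → (α → C)) (τ : (α → C) → wordStabilizer z),
      (∀ v w, wordType (fun k => (z k, v k)) = wordType (fun k => (z k, w k)) → r v = r w) ∧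
        ∀ w, w = r w ∘ (τ w : Equiv.Perm α) := by
  let s : Setoid (α → C) := Setoid.ker fun w => wordType fun k => (z k, w k)
  let r (w : α → C) : α → C := (Quotient.mk s w).out
  have hperm (w : α → C) : ∃ τ : wordStabilizer z, w = r w ∘ (τ : Equiv.Perm α) := by
    have htype : wordType (fun k => (z k, w k)) = wordType fun k => (z k, r w k) :=
      s.symm (Quotient.mk_out w)
    obtain ⟨τ, hτ⟩ := exists_eq_comp_of_wordType_eq htype
    simp only [funext_iff, Function.comp_apply, Prod.mk.injEq, forall_and] at hτ
    exact ⟨⟨τ, (funext hτ.1).symm⟩, funext hτ.2⟩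
  choose τ hτ using hperm
  exact ⟨r, τ, fun v w h => congrArg Quotient.out (Quotient.sound (s := s) h), hτ⟩

/-- A solution `(h, w)` is determined by the joint type of `z` and `w` and by `τ w * h`, where
`w = r w ∘ τ w` with a representative `r w` of that type: `σ ∘ w = w ∘ h = r w ∘ (τ w * h)`
recovers `w`, and then `h`. -/
lemma card_twisted_fixed_le [DecidableEq α] (z : α → β) {σ : C → C} (hσ : σ.Injective)
    (S : Finset (β → C → ℕ))
    (hS : ∀ h ∈ wordStabilizer z, ∀ w : α → C, w ∘ h = σ ∘ w →
      Function.curry (wordType fun k => (z k, w k)) ∈ S) :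
    Nat.card {x : wordStabilizer z × (α → C) // x.2 ∘ (x.1 : Equiv.Perm α) = σ ∘ x.2} ≤
      S.card * Fintype.card (wordStabilizer z) := by
  obtain ⟨r, τ, hr, hτ⟩ := exists_representative_wordType_pair (C := C) z
  let Φ (x : {x : wordStabilizer z × (α → C) // x.2 ∘ (x.1 : Equiv.Perm α) = σ ∘ x.2}) :
      S × wordStabilizer z := (⟨_, hS _ x.1.1.2 _ x.2⟩, τ x.1.2 * x.1.1)
  have hΦ : Φ.Injective := by
    rintro ⟨⟨g, v⟩, hv : v ∘ g = σ ∘ v⟩ ⟨⟨h, w⟩, hw : w ∘ h = σ ∘ w⟩ hvw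
    obtain ⟨htype, hperm⟩ := Prod.ext_iff.1 hvw
    have hrep : r v = r w := hr v w (Function.curry_injective (Subtype.ext_iff.1 htype))
    replace hperm : τ v * g = τ w * h := hperm
    have hσvw : σ ∘ v = σ ∘ w := by
      rw [← hv, ← hw]
      nth_rw 1 [hτ v]
      nth_rw 1 [hτ w]
      rw [hrep, Function.comp_assoc, Function.comp_assoc, ← Equiv.Perm.coe_mul,
        ← Equiv.Perm.coe_mul, ← Subgroup.coe_mul, ← Subgroup.coe_mul, hperm]
    obtain rfl : v = w := hσ.comp_left hσvw
    obtain rfl : g = h := mul_left_cancel hperm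
    rfl
  simpa using Nat.card_le_card_of_injective Φ hΦ

end WordTypes

section SymmetricTables

variable (D : Type*) [Fintype D] [DecidableEq D]

/-- The symmetric tables of natural numbers of total `m`. -/
def symmTables (m : ℕ) : Finset (D × D → ℕ) :=
  (Finset.univ.piAntidiag m).filter fun T => ∀ c, T c.swap = T c

variable {D}

lemma mem_symmTables {m : ℕ} {T : D × D → ℕ} :
    T ∈ symmTables D m ↔ ∑ c, T c = m ∧ ∀ c, T c.swap = T c := by
  simp [symmTables, Finset.mem_piAntidiag]

lemma card_symmTables_mono [Nonempty D] : Monotone fun m => (symmTables D m).card := by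
  intro m m' hm
  obtain ⟨a⟩ := ‹Nonempty D›
  refine Finset.card_le_card_of_injOn (· + Pi.single (a, a) (m' - m)) (fun T hT => ?_)
    (add_left_injective _).injOn
  obtain ⟨hsum, hsymm⟩ := mem_symmTables.1 hT
  refine mem_symmTables.2 ⟨?_, fun c => ?_⟩
  · simp [Finset.sum_add_distrib, hsum, Nat.add_sub_cancel' hm]
  · have hswap : c.swap = (a, a) ↔ c = (a, a) := Prod.swap_eq_iff_eq_swap
    simp [hsymm c, Pi.single_apply, hswap]

variable {α β : Type*} [Fintype α] [DecidableEq α] [DecidableEq β]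

/-- The pairs `(h, i)` are the solutions `w` of `w ∘ h = swap ∘ w`, with `w k = (i k, i (h k))`. -/
lemma card_square_fixed_le [Fintype β] (z : α → β) :
    Nat.card {x : wordStabilizer z × (α → D) // x.2 ∘ ((x.1 : Equiv.Perm α) ^ 2 : Equiv.Perm α) =
      x.2} ≤ (∏ b, (symmTables D (wordType z b)).card) * Fintype.card (wordStabilizer z) := by
  let Φ (x : {x : wordStabilizer z × (α → D) //
      x.2 ∘ ((x.1 : Equiv.Perm α) ^ 2 : Equiv.Perm α) = x.2}) :
      {x : wordStabilizer z × (α → D × D) // x.2 ∘ (x.1 : Equiv.Perm α) = Prod.swap ∘ x.2} :=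
    ⟨(x.1.1, fun k => (x.1.2 k, x.1.2 ((x.1.1 : Equiv.Perm α) k))),
      funext fun k => Prod.ext rfl (by simpa [pow_two] using congrFun x.2 k)⟩
  have hΦ : Φ.Injective := by
    rintro ⟨⟨g, i⟩, hi⟩ ⟨⟨h, j⟩, hj⟩ hij
    obtain ⟨rfl, hpair⟩ := Prod.ext_iff.1 (Subtype.ext_iff.1 hij)
    obtain rfl : i = j := funext fun k => congrArg Prod.fst (congrFun hpair k)
    rfl
  rw [← Fintype.card_piFinset]
  refine (Nat.card_le_card_of_injective Φ hΦ).trans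
    (card_twisted_fixed_le z Prod.swap_injective _ fun h hz w hw => ?_)
  exact Fintype.mem_piFinset.2 fun b => mem_symmTables.2 ⟨sum_wordType_pair z w b, fun c =>
    wordType_pair_apply_apply_of_comp_eq Prod.swap_injective hz hw b c⟩

lemma card_mul_re_trace_wordSquareMean (z : α → β) :
    Fintype.card (wordStabilizer z) * (wordSquareMean D z).trace.re =
      Nat.card {x : wordStabilizer z × (α → D) //
        x.2 ∘ ((x.1 : Equiv.Perm α) ^ 2 : Equiv.Perm α) = x.2} := by
  have hcard : (Fintype.card (wordStabilizer z) : ℝ) ≠ 0 := mod_cast Fintype.card_ne_zero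
  rw [wordSquareMean, squareMean, Matrix.trace_smul, Complex.smul_re, smul_eq_mul,
    mul_inv_cancel_left₀ hcard, Matrix.trace_sum, Complex.re_sum, Nat.card_eq_fintype_card,
    Fintype.card_subtype, Finset.card_filter, Fintype.sum_prod_type]
  simp only [Nat.cast_sum, Nat.cast_ite, Nat.cast_one, Nat.cast_zero]
  refine Finset.sum_congr rfl fun h _ => ?_
  rw [Matrix.trace, Complex.re_sum]
  refine Finset.sum_congr rfl fun i _ => ?_
  rw [Matrix.diag_apply, permRep_apply, apply_ite Complex.re, Complex.one_re, Complex.zero_re]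

lemma re_trace_wordSquareMean_le [Fintype β] [Nonempty D] (z : α → β) :
    (wordSquareMean D z).trace.re ≤
      ((symmTables D (Fintype.card α)).card : ℝ) ^ Fintype.card β := by
  have hcard : (0 : ℝ) < Fintype.card (wordStabilizer z) := mod_cast Fintype.card_pos
  have htables : ∏ b, (symmTables D (wordType z b)).card ≤
      (symmTables D (Fintype.card α)).card ^ Fintype.card β := by
    rw [← Finset.card_univ (α := β)]
    exact Finset.prod_le_pow_card _ _ _ fun b _ =>
      card_symmTables_mono (Fintype.card_subtype_le fun k => z k = b)
  rw [← mul_le_mul_iff_right₀ hcard, card_mul_re_trace_wordSquareMean, mul_comm]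
  exact_mod_cast (card_square_fixed_le z).trans (Nat.mul_le_mul_right _ htables)

end SymmetricTables

section PowersAndTests

variable {N : Type*} [Fintype N] [DecidableEq N] {A B E E' : Matrix N N ℂ}

/-- The power `u ^ p` on the support, the scalar function behind `mpow`. -/
def supportRpow (p u : ℝ) : ℝ :=
  if u ≤ 0 then 0 else u ^ p

lemma supportRpow_of_nonneg {p u : ℝ} (hp : p ≠ 0) (hu : 0 ≤ u) : supportRpow p u = u ^ p := by
  obtain rfl | hu := hu.eq_or_lt
  · rw [supportRpow, if_pos le_rfl, Real.zero_rpow hp]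
  · rw [supportRpow, if_neg hu.not_ge]

lemma supportRpow_nonneg (p u : ℝ) : 0 ≤ supportRpow p u := by
  rw [supportRpow]
  split_ifs with hu
  · exact le_rfl
  · exact Real.rpow_nonneg (le_of_not_ge hu) p

lemma SpectralResolution.mpow_sum_smul {J : Type*} [Fintype J] {q : J → Matrix N N ℂ}
    (hq : SpectralResolution q) (a : J → ℝ) (p : ℝ) :
    mpow (∑ j, a j • q j) p = ∑ j, supportRpow p (a j) • q j :=
  hq.matFun_sum_smul (supportRpow p) a

lemma posSemidef_matFun (hA : A.IsHermitian) {f : ℝ → ℝ} (hf : ∀ u, 0 ≤ f u) :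
    (matFun f A).PosSemidef := by
  rw [matFun_eq_cfc hA, ← Matrix.nonneg_iff_posSemidef]
  exact cfc_nonneg fun u _ => hf u

lemma posSemidef_mpow (hA : A.IsHermitian) (p : ℝ) : (mpow A p).PosSemidef :=
  posSemidef_matFun hA (supportRpow_nonneg p)

lemma exists_spectralResolution_of_commute (hA : A.PosSemidef) (hB : B.PosSemidef)
    (hAB : Commute A B) :
    ∃ (J : Type) (_ : Fintype J) (p : J → Matrix N N ℂ) (a b : J → ℝ), SpectralResolution p ∧
      A = ∑ j, a j • p j ∧ B = ∑ j, b j • p j ∧ (∀ j, 0 ≤ a j) ∧ ∀ j, 0 ≤ b j := by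
  obtain ⟨J, _, p, a, hp, ha, -⟩ := exists_spectralResolution_of_pairwise_commute
    (x := ![A, B]) (Fin.forall_fin_two.2 ⟨hA.isHermitian, hB.isHermitian⟩)
    (by simp [Fin.forall_fin_two, hAB, hAB.symm])
  have hcut (M : Matrix N N ℂ) (hM : M.PosSemidef) (m : J → ℝ) (hm : M = ∑ j, m j • p j) :
      M = ∑ j, max (m j) 0 • p j := by
    rw [hm]
    refine Finset.sum_congr rfl fun j _ => ?_
    by_cases hj : p j = 0
    · rw [hj, smul_zero, smul_zero]
    · rw [max_eq_left (hp.coeff_nonneg (hm ▸ hM) hj)]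
  exact ⟨J, inferInstance, p, fun j => max (a 0 j) 0, fun j => max (a 1 j) 0, hp,
    hcut A hA (a 0) (ha 0), hcut B hB (a 1) (ha 1), fun _ => le_max_right _ _,
    fun _ => le_max_right _ _⟩

lemma sum_mul_rpow_mul_le {J : Type*} [Fintype J] {b e w : J → ℝ} (hb : ∀ j, 0 ≤ b j)
    (he : ∀ j, 0 ≤ e j) (hw : ∀ j, 0 ≤ w j) {t : ℝ} (ht0 : 0 < t) (ht1 : t < 1) :
    ∑ j, b j * e j ^ t * w j ≤
      (∑ j, b j ^ (1 / (1 - t)) * w j) ^ (1 - t) * (∑ j, e j * w j) ^ t := by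
  have h1t : 0 < 1 - t := sub_pos.2 ht1
  have hpq : Real.HolderConjugate (1 / (1 - t)) (1 / t) :=
    Real.holderConjugate_iff.2 ⟨by rw [lt_div_iff₀ h1t]; linarith, by simp⟩
  calc ∑ j, b j * e j ^ t * w j = ∑ j, (b j * w j ^ (1 - t)) * (e j ^ t * w j ^ t) := by
        refine Finset.sum_congr rfl fun j _ => ?_
        have hsplit : w j ^ (1 - t) * w j ^ t = w j := by
          rw [← Real.rpow_add_of_nonneg (hw j) h1t.le ht0.le, sub_add_cancel, Real.rpow_one]
        linear_combination -(b j * e j ^ t) * hsplit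
    _ ≤ _ := Real.inner_le_Lp_mul_Lq_of_nonneg Finset.univ hpq
        (fun j _ => mul_nonneg (hb j) (Real.rpow_nonneg (hw j) _))
        (fun j _ => mul_nonneg (Real.rpow_nonneg (he j) _) (Real.rpow_nonneg (hw j) _))
    _ = _ := by
        simp only [one_div_one_div]
        congr 2 <;> refine Finset.sum_congr rfl fun j _ => ?_
        · rw [Real.mul_rpow (hb j) (Real.rpow_nonneg (hw j) _), ← Real.rpow_mul (hw j),
            mul_one_div_cancel h1t.ne', Real.rpow_one]
        · rw [← Real.mul_rpow (he j) (hw j), ← Real.rpow_mul (mul_nonneg (he j) (hw j)),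
            mul_one_div_cancel ht0.ne', Real.rpow_one]

omit [DecidableEq N] in
lemma re_trace_sum_smul {J : Type*} [Fintype J] (a : J → ℝ) (p : J → Matrix N N ℂ) :
    (∑ j, a j • p j).trace.re = ∑ j, a j * (p j).trace.re := by
  simp [Matrix.trace_sum, Matrix.trace_smul]

lemma re_trace_mul_mpow_le (hB : B.PosSemidef) (hE : E.PosSemidef) (hBE : Commute B E) {t : ℝ}
    (ht0 : 0 < t) (ht1 : t < 1) :
    (B * mpow E t).trace.re ≤
      (mpow B (1 / (1 - t))).trace.re ^ (1 - t) * E.trace.re ^ t := by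
  obtain ⟨J, _, p, b, e, hp, rfl, rfl, hb, he⟩ := exists_spectralResolution_of_commute hB hE hBE
  have hexp : 1 / (1 - t) ≠ 0 := one_div_ne_zero (sub_pos.2 ht1).ne'
  simp only [hp.mpow_sum_smul, hp.sum_smul_mul_sum_smul, re_trace_sum_smul,
    supportRpow_of_nonneg ht0.ne' (he _), supportRpow_of_nonneg hexp (hb _)]
  exact sum_mul_rpow_mul_le hb he (fun j => re_trace_nonneg (hp.posSemidef j)) ht0 ht1

lemma le_mpow_mul_mpow (hA : A.PosSemidef) (hE : E.PosSemidef) (hAE : Commute A E)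
    (hle : A ≤ E) {t : ℝ} (ht0 : 0 < t) (ht1 : t < 1) : A ≤ mpow A (1 - t) * mpow E t := by
  obtain ⟨J, _, p, a, e, hp, rfl, rfl, ha, he⟩ := exists_spectralResolution_of_commute hA hE hAE
  have h1t : 0 < 1 - t := sub_pos.2 ht1
  rw [hp.mpow_sum_smul, hp.mpow_sum_smul, hp.sum_smul_mul_sum_smul]
  rw [Matrix.le_iff, ← Finset.sum_sub_distrib] at hle
  simp only [← sub_smul] at hle
  refine hp.sum_smul_le_sum_smul fun j hj => ?_
  have hae : a j ≤ e j := sub_nonneg.1 (hp.coeff_nonneg hle hj)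
  rw [supportRpow_of_nonneg h1t.ne' (ha j), supportRpow_of_nonneg ht0.ne' (he j)]
  calc a j = a j ^ (1 - t) * a j ^ t := by
        rw [← Real.rpow_add_of_nonneg (ha j) h1t.le ht0.le, sub_add_cancel, Real.rpow_one]
    _ ≤ a j ^ (1 - t) * e j ^ t :=
        mul_le_mul_of_nonneg_left (Real.rpow_le_rpow (ha j) hae ht0.le)
          (Real.rpow_nonneg (ha j) _)

lemma mpow_le_one (hA : A.PosSemidef) (hA1 : A ≤ 1) {p : ℝ} (hp : 0 < p) : mpow A p ≤ 1 := by
  obtain ⟨J, _, q, a, b, hq, rfl, h1, ha, -⟩ :=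
    exists_spectralResolution_of_commute hA Matrix.PosSemidef.one (Commute.one_right A)
  have hone : (1 : Matrix N N ℂ) = ∑ j, (1 : ℝ) • q j := by simp only [one_smul, hq.complete]
  rw [hone, Matrix.le_iff, ← Finset.sum_sub_distrib] at hA1
  simp only [← sub_smul] at hA1
  rw [hq.mpow_sum_smul, hone]
  refine hq.sum_smul_le_sum_smul fun j hj => ?_
  rw [supportRpow_of_nonneg hp.ne' (ha j)]
  exact Real.rpow_le_one (ha j) (sub_nonneg.1 (hq.coeff_nonneg hA1 hj)) hp.le

/-- The Neyman–Pearson test `{E ≥ θ E'}`: the projection onto the eigenspaces of `E - θ • E'` with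
nonnegative eigenvalue. -/
def neymanPearson (θ : ℝ) (E E' : Matrix N N ℂ) : Matrix N N ℂ :=
  matFun (Set.indicator (Set.Ici 0) 1) (E - θ • E')

omit [Fintype N] [DecidableEq N] in
lemma isHermitian_sub_smul (hE : E.IsHermitian) (hE' : E'.IsHermitian) (θ : ℝ) :
    (E - θ • E').IsHermitian :=
  hE.sub ((IsSelfAdjoint.all θ).smul hE'.isSelfAdjoint)

lemma posSemidef_neymanPearson (hE : E.IsHermitian) (hE' : E'.IsHermitian) (θ : ℝ) :
    (neymanPearson θ E E').PosSemidef :=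
  posSemidef_matFun (isHermitian_sub_smul hE hE' θ)
    fun _ => Set.indicator_nonneg (fun _ _ => zero_le_one) _

lemma neymanPearson_le_one (hE : E.IsHermitian) (hE' : E'.IsHermitian) (θ : ℝ) :
    neymanPearson θ E E' ≤ 1 := by
  rw [neymanPearson, matFun_eq_cfc (isHermitian_sub_smul hE hE' θ)]
  exact cfc_le_one _ _ fun _ _ => Set.indicator_le_self' (fun _ _ => zero_le_one) _

lemma SpectralResolution.neymanPearson_sum_smul {J : Type*} [Fintype J] {p : J → Matrix N N ℂ}
    (hp : SpectralResolution p) (θ : ℝ) (a e : J → ℝ) :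
    neymanPearson θ (∑ j, a j • p j) (∑ j, e j • p j) =
      ∑ j, (if θ * e j ≤ a j then (1 : ℝ) else 0) • p j := by
  rw [neymanPearson, Finset.smul_sum, ← Finset.sum_sub_distrib]
  simp only [smul_smul, ← sub_smul]
  rw [hp.matFun_sum_smul]
  simp [Set.indicator_apply]

lemma smul_neymanPearson_mul_le (hE : E.PosSemidef) (hE' : E'.PosSemidef) (hc : Commute E E')
    (θ : ℝ) : θ • (neymanPearson θ E E' * E') ≤ neymanPearson θ E E' * E := by
  obtain ⟨J, _, p, a, e, hp, rfl, rfl, -, -⟩ := exists_spectralResolution_of_commute hE hE' hc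
  rw [hp.neymanPearson_sum_smul, hp.sum_smul_mul_sum_smul, hp.sum_smul_mul_sum_smul,
    Finset.smul_sum]
  simp only [smul_smul]
  refine hp.sum_smul_le_sum_smul fun j _ => ?_
  split_ifs with h
  · simpa using h
  · simp

lemma mpow_mul_one_sub_neymanPearson_le (hE : E.PosSemidef) (hE' : E'.PosSemidef)
    (hc : Commute E E') {θ : ℝ} (hθ : 0 ≤ θ) {t : ℝ} (ht : 0 < t) :
    mpow E t * (1 - neymanPearson θ E E') ≤ θ ^ t • mpow E' t := by
  obtain ⟨J, _, p, a, e, hp, rfl, rfl, ha, he⟩ := exists_spectralResolution_of_commute hE hE' hc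
  rw [hp.neymanPearson_sum_smul, hp.mpow_sum_smul, hp.mpow_sum_smul, mul_sub, mul_one,
    hp.sum_smul_mul_sum_smul, ← Finset.sum_sub_distrib, Finset.smul_sum]
  simp only [← sub_smul, smul_smul]
  refine hp.sum_smul_le_sum_smul fun j _ => ?_
  rw [supportRpow_of_nonneg ht.ne' (ha j), supportRpow_of_nonneg ht.ne' (he j),
    ← Real.mul_rpow hθ (he j)]
  split_ifs with h
  · simpa using Real.rpow_nonneg (mul_nonneg hθ (he j)) t
  · simpa using Real.rpow_le_rpow (ha j) (not_le.1 h).le ht.le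

end PowersAndTests

section TensorPowers

variable {α D : Type*} [Fintype α]

lemma conjTranspose_tensorFam (A : α → Matrix D D ℂ) :
    (tensorFam A)ᴴ = tensorFam fun k => (A k)ᴴ := by
  ext i j
  simp [tensorFam, Matrix.conjTranspose_apply]

lemma tensorFam_eq_zero {A : α → Matrix D D ℂ} {k : α} (hk : A k = 0) : tensorFam A = 0 := by
  ext i j
  exact Finset.prod_eq_zero (Finset.mem_univ k) (by simp [hk])

lemma tensorFam_one [DecidableEq D] : tensorFam (fun _ : α => (1 : Matrix D D ℂ)) = 1 := by
  classical
  ext i j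
  simp [tensorFam, Matrix.one_apply, Fintype.prod_ite_zero, funext_iff]

lemma tensorFam_sum_smul [DecidableEq α] {J : α → Type*} [∀ k, Fintype (J k)]
    (a : ∀ k, J k → ℝ) (p : ∀ k, J k → Matrix D D ℂ) :
    tensorFam (fun k => ∑ j, a k j • p k j) =
      ∑ j : ∀ k, J k, (∏ k, a k (j k)) • tensorFam fun k => p k (j k) := by
  ext x y
  simp [tensorFam, Matrix.sum_apply, Fintype.prod_sum, Finset.prod_mul_distrib]

variable [Fintype D] [DecidableEq α]

lemma tensorFam_mul (A B : α → Matrix D D ℂ) :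
    tensorFam A * tensorFam B = tensorFam fun k => A k * B k := by
  ext i j
  simp [tensorFam, Matrix.mul_apply, Fintype.prod_sum, Finset.prod_mul_distrib]

lemma trace_tensorFam (A : α → Matrix D D ℂ) : (tensorFam A).trace = ∏ k, (A k).trace := by
  simp [tensorFam, Matrix.trace, Fintype.prod_sum]

variable [DecidableEq D]

lemma spectralResolution_tensorFam {J : α → Type*} [∀ k, Fintype (J k)]
    {p : ∀ k, J k → Matrix D D ℂ} (hp : ∀ k, SpectralResolution (p k)) :
    SpectralResolution fun j : ∀ k, J k => tensorFam fun k => p k (j k) := by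
  refine ⟨⟨⟨fun j => ?_, fun j l hjl => ?_⟩, ?_⟩, fun j => ?_⟩
  · simp only [IsIdempotentElem, tensorFam_mul, (hp _).mul_self]
  · obtain ⟨k, hk⟩ := Function.ne_iff.1 hjl
    exact (tensorFam_mul _ _).trans (tensorFam_eq_zero ((hp k).ortho hk))
  · simpa only [one_smul, Finset.prod_const_one, (hp _).complete, tensorFam_one] using
      (tensorFam_sum_smul (fun _ _ => 1) p).symm
  · simp only [Matrix.IsHermitian, conjTranspose_tensorFam, ((hp _).isHermitian _).eq]

variable {A : α → Matrix D D ℂ}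

omit [Fintype D] [DecidableEq α] [DecidableEq D] in
lemma posSemidef_tensorFam [Finite D] (hA : ∀ k, (A k).PosSemidef) :
    (tensorFam A).PosSemidef := by
  classical
  have := Fintype.ofFinite D
  choose J _ p a _ hp hAp _ ha _ using fun k =>
    exists_spectralResolution_of_commute (hA k) (hA k) rfl
  rw [funext hAp, tensorFam_sum_smul]
  exact (spectralResolution_tensorFam hp).posSemidef_sum_smul fun j _ =>
    Finset.prod_nonneg fun k _ => ha k _

lemma mpow_tensorFam (hA : ∀ k, (A k).PosSemidef) {s : ℝ} (hs : s ≠ 0) :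
    mpow (tensorFam A) s = tensorFam fun k => mpow (A k) s := by
  choose J _ p a _ hp hAp _ ha _ using fun k =>
    exists_spectralResolution_of_commute (hA k) (hA k) rfl
  rw [funext hAp]
  simp only [(hp _).mpow_sum_smul, tensorFam_sum_smul,
    (spectralResolution_tensorFam hp).mpow_sum_smul, supportRpow_of_nonneg hs (ha _ _),
    supportRpow_of_nonneg hs (Finset.prod_nonneg fun k _ => ha k _),
    Real.finsetProd_rpow _ _ fun k _ => ha k _]

omit [DecidableEq D] in
lemma re_trace_tensorFam (hA : ∀ k, (A k).PosSemidef) :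
    (tensorFam A).trace.re = ∏ k, (A k).trace.re := by
  have hreal (k : α) : (A k).trace = ((A k).trace.re : ℂ) :=
    Complex.eq_re_of_ofReal_le (hA k).trace_nonneg
  rw [trace_tensorFam, Finset.prod_congr rfl fun k _ => hreal k, ← Complex.ofReal_prod,
    Complex.ofReal_re]

end TensorPowers

section IidMean

variable {α γ δ : Type*} [Fintype α] [DecidableEq α] [Fintype γ] [Fintype δ]

/-- The mean of `F` over words whose letters are drawn independently with weights `p`. -/
def iidMean (p : γ → ℝ) (F : (α → γ) → ℝ) : ℝ :=
  ∑ u, (∏ k, p (u k)) * F u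

lemma iidMean_mono {p : γ → ℝ} (hp : ∀ c, 0 ≤ p c) {F G : (α → γ) → ℝ} (hFG : ∀ u, F u ≤ G u) :
    iidMean p F ≤ iidMean p G :=
  Finset.sum_le_sum fun u _ =>
    mul_le_mul_of_nonneg_left (hFG u) (Finset.prod_nonneg fun _ _ => hp _)

lemma iidMean_nonneg {p : γ → ℝ} (hp : ∀ c, 0 ≤ p c) {F : (α → γ) → ℝ} (hF : ∀ u, 0 ≤ F u) :
    0 ≤ iidMean p F :=
  Finset.sum_nonneg fun u _ => mul_nonneg (Finset.prod_nonneg fun _ _ => hp _) (hF u)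

lemma iidMean_prod (p f : γ → ℝ) :
    iidMean p (fun u : α → γ => ∏ k, f (u k)) = (∑ c, p c * f c) ^ Fintype.card α := by
  simp only [iidMean, ← Finset.prod_mul_distrib]
  rw [← Fintype.prod_sum fun (_ : α) c => p c * f c, Finset.prod_const, Finset.card_univ]

lemma iidMean_const_mul (p : γ → ℝ) (c : ℝ) (F : (α → γ) → ℝ) :
    iidMean p (fun u => c * F u) = c * iidMean p F := by
  simp only [iidMean, Finset.mul_sum, mul_left_comm]

lemma iidMean_const (p : ProbVec γ) (c : ℝ) : iidMean p.1 (fun _ : α → γ => c) = c := by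
  rw [iidMean, ← Finset.sum_mul, ← Fintype.prod_sum fun (_ : α) a => p.1 a, p.2.2,
    Finset.prod_const_one, one_mul]

lemma iidMean_le_of_forall_le (p : ProbVec γ) {F : (α → γ) → ℝ} {c : ℝ} (hF : ∀ u, F u ≤ c) :
    iidMean p.1 F ≤ c :=
  (iidMean_mono p.2.1 hF).trans_eq (iidMean_const p c)

lemma iidMean_comp_perm (p : γ → ℝ) (F : (α → γ) → ℝ) (g : Equiv.Perm α) :
    iidMean p (fun u => F (u ∘ g)) = iidMean p F := by
  refine Fintype.sum_equiv (g.symm.arrowCongr (.refl γ)) _ _ fun u => ?_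
  exact congrArg (· * F (u ∘ g)) (Equiv.prod_comp g fun k => p (u k)).symm

lemma iidMean_comm (p : γ → ℝ) (q : δ → ℝ) (F : (α → γ) → (α → δ) → ℝ) :
    iidMean p (fun u => iidMean q (F u)) = iidMean q fun v => iidMean p fun u => F u v := by
  simp only [iidMean, Finset.mul_sum]
  rw [Finset.sum_comm]
  simp only [mul_left_comm]

lemma iidMean_pair (p : γ → ℝ) (q : δ → ℝ) (F : (α → γ × δ) → ℝ) :
    iidMean (fun c => p c.1 * q c.2) F =
      iidMean p fun u => iidMean q fun v => F fun k => (u k, v k) := by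
  simp only [iidMean, Finset.prod_mul_distrib, Finset.mul_sum, ← mul_assoc]
  rw [← (Equiv.arrowProdEquivProdArrow α (fun _ => γ) (fun _ => δ)).symm.sum_comp,
    Fintype.sum_prod_type]
  rfl

lemma re_trace_tensorFam_mul_eq_iidMean {N : Type*} [Fintype N] (A : Matrix (α → N) (α → N) ℂ)
    (q : δ → ℝ) (ρ : α → δ → Matrix N N ℂ) :
    (A * tensorFam fun k => ∑ c, q c • ρ k c).trace.re =
      iidMean q fun v => (A * tensorFam fun k => ρ k (v k)).trace.re := by
  rw [tensorFam_sum_smul (fun _ => q) ρ, Finset.mul_sum]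
  simp only [mul_smul_comm, re_trace_sum_smul, iidMean]

end IidMean

section UniversalTest

variable {α D γ δ : Type*} [Fintype α] [DecidableEq α] [Fintype D] [DecidableEq D]
  [DecidableEq γ] [DecidableEq δ]

/-- The universal test for the word `u` against the pair of words `(u, v)`: `wordSquareMean`
dominates every permutation invariant state, so it replaces the unknown states in a
Neyman–Pearson test with threshold `θ`. -/
def universalTest (D : Type*) [Fintype D] [DecidableEq D] (θ : ℝ) (u : α → γ) (v : α → δ) :
    Matrix (α → D) (α → D) ℂ :=
  neymanPearson θ (wordSquareMean D fun k => (u k, v k)) (wordSquareMean D u)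

lemma posSemidef_universalTest (θ : ℝ) (u : α → γ) (v : α → δ) :
    (universalTest D θ u v).PosSemidef :=
  posSemidef_neymanPearson (posSemidef_wordSquareMean _).isHermitian
    (posSemidef_wordSquareMean _).isHermitian θ

lemma universalTest_le_one (θ : ℝ) (u : α → γ) (v : α → δ) : universalTest D θ u v ≤ 1 :=
  neymanPearson_le_one (posSemidef_wordSquareMean _).isHermitian
    (posSemidef_wordSquareMean _).isHermitian θ

lemma permRep_conj_universalTest (θ : ℝ) (u : α → γ) (v : α → δ) (g : Equiv.Perm α) :
    permRep α D g * universalTest D θ u v * permRep α D g⁻¹ =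
      universalTest D θ (u ∘ (g⁻¹ : Equiv.Perm α)) (v ∘ (g⁻¹ : Equiv.Perm α)) := by
  let U : Matrix.unitaryGroup (α → D) ℂ := ⟨permRep α D g, Matrix.mem_unitaryGroup_iff.2 <| by
    rw [Matrix.star_eq_conjTranspose, conjTranspose_permRep, ← map_mul, mul_inv_cancel, map_one]⟩
  have hU : star (U : Matrix (α → D) (α → D) ℂ) = permRep α D g⁻¹ := conjTranspose_permRep g
  have hconj := matFun_unitary_conj (isHermitian_sub_smul
    (posSemidef_wordSquareMean (D := D) fun k => (u k, v k)).isHermitian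
    (posSemidef_wordSquareMean u).isHermitian θ) U (Set.indicator (Set.Ici 0) 1)
  rw [hU, mul_sub, sub_mul, mul_smul_comm, smul_mul_assoc] at hconj
  rw [universalTest, neymanPearson, universalTest, neymanPearson]
  exact hconj.symm.trans (by rw [permRep_conj_wordSquareMean, permRep_conj_wordSquareMean]; rfl)

lemma re_trace_mul_le_re_trace_mul_wordSquareMean {u : α → γ} {T σ : Matrix (α → D) (α → D) ℂ}
    (hT : T.PosSemidef) (hTu : ∀ g ∈ wordStabilizer u, Commute (permRep α D g) T)
    (hσ : IsDensity σ) : (T * σ).trace.re ≤ (T * wordSquareMean D u).trace.re := by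
  have htrace : (conjSum (permRep α D) (wordStabilizer u) σ).trace.re =
      Fintype.card (wordStabilizer u) := by
    simpa [hσ.2] using re_trace_mul_conjSum (π := permRep α D) (K := wordStabilizer u)
      (fun g _ => Commute.one_right _) σ
  have hle := re_trace_mul_le_re_trace_mul hT <| le_re_trace_smul_wordSquareMean u
    (posSemidef_conjSum conjTranspose_permRep hσ.1) fun g hg => commute_conjSum σ hg
  rw [re_trace_mul_conjSum hTu, htrace, mul_smul_comm, Matrix.trace_smul, Complex.smul_re,
    smul_eq_mul] at hle
  exact le_of_mul_le_mul_left hle (Nat.cast_pos.2 Fintype.card_pos)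

variable [Fintype γ] [Fintype δ]

lemma re_trace_universalTest_mul_wordSquareMean_le [Nonempty D] {θ : ℝ} (hθ : 0 < θ) (u : α → γ)
    (v : α → δ) :
    (universalTest D θ u v * wordSquareMean D u).trace.re ≤
      θ⁻¹ * ((symmTables D (Fintype.card α)).card : ℝ) ^ (Fintype.card γ * Fintype.card δ) := by
  let E := wordSquareMean D fun k => (u k, v k)
  have hE : E.PosSemidef := posSemidef_wordSquareMean _
  rw [le_inv_mul_iff₀ hθ]
  calc θ * (universalTest D θ u v * wordSquareMean D u).trace.re
      = (1 * θ • (universalTest D θ u v * wordSquareMean D u)).trace.re := by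
        rw [one_mul, Matrix.trace_smul, Complex.smul_re, smul_eq_mul]
    _ ≤ (1 * (universalTest D θ u v * E)).trace.re :=
        re_trace_mul_le_re_trace_mul .one <| smul_neymanPearson_mul_le hE
          (posSemidef_wordSquareMean u) (commute_wordSquareMean (wordStabilizer_pair_le u v)) θ
    _ = (E * universalTest D θ u v).trace.re := by rw [one_mul, Matrix.trace_mul_comm]
    _ ≤ (E * 1).trace.re := re_trace_mul_le_re_trace_mul hE (universalTest_le_one θ u v)
    _ ≤ _ := by
        rw [mul_one, ← Fintype.card_prod]
        exact re_trace_wordSquareMean_le _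

/-- Averaged over `v`, the test commutes with the stabilizer of `u`, so that
`wordSquareMean D u` dominates `σ` against it. -/
lemma iidMean_re_trace_universalTest_mul_le [Nonempty D] {θ : ℝ} (hθ : 0 < θ) (q : ProbVec δ)
    (u : α → γ) {σ : Matrix (α → D) (α → D) ℂ} (hσ : IsDensity σ) :
    iidMean q.1 (fun v => (universalTest D θ u v * σ).trace.re) ≤
      θ⁻¹ * ((symmTables D (Fintype.card α)).card : ℝ) ^ (Fintype.card γ * Fintype.card δ) := by
  let T := ∑ v : α → δ, (∏ k, q.1 (v k)) • universalTest D θ u v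
  have hT : T.PosSemidef := Matrix.posSemidef_sum _ fun v _ =>
    (posSemidef_universalTest θ u v).smul (Finset.prod_nonneg fun _ _ => q.2.1 _)
  have hTu (g) (hg : g ∈ wordStabilizer u) : Commute (permRep α D g) T := by
    have hu : u ∘ (g⁻¹ : Equiv.Perm α) = u := inv_mem hg
    rw [commute_permRep_iff, Finset.mul_sum, Finset.sum_mul]
    refine Fintype.sum_equiv (g.arrowCongr (.refl δ)) _ _ fun v => ?_
    rw [mul_smul_comm, smul_mul_assoc, permRep_conj_universalTest, hu]
    exact congrArg (· • _) (Equiv.prod_comp g⁻¹ fun k => q.1 (v k)).symm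
  have htrace (A : Matrix (α → D) (α → D) ℂ) :
      (T * A).trace.re = iidMean q.1 fun v => (universalTest D θ u v * A).trace.re := by
    simp only [T, Finset.sum_mul, smul_mul_assoc, re_trace_sum_smul, iidMean]
  calc iidMean q.1 (fun v => (universalTest D θ u v * σ).trace.re)
      = (T * σ).trace.re := (htrace σ).symm
    _ ≤ (T * wordSquareMean D u).trace.re := re_trace_mul_le_re_trace_mul_wordSquareMean hT hTu hσ
    _ = iidMean q.1 fun v => (universalTest D θ u v * wordSquareMean D u).trace.re := htrace _
    _ ≤ _ := iidMean_le_of_forall_le q (re_trace_universalTest_mul_wordSquareMean_le hθ u)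

end UniversalTest

section RenyiBound

variable {D γ δ : Type*} [Fintype D] [DecidableEq D] [Fintype γ] [Fintype δ]

/-- The average of `ρ` with weights `q`, taken in the matrix power `1 - t`. -/
def powerMix (q : δ → ℝ) (ρ : δ → Matrix D D ℂ) (t : ℝ) : Matrix D D ℂ :=
  ∑ e, q e • mpow (ρ e) (1 - t)

/-- The argument of the logarithm in the Rényi information `I_{1-t}[δ; B | γ]`. -/
def renyiTrace (p : γ → ℝ) (q : δ → ℝ) (ρ : γ → δ → Matrix D D ℂ) (t : ℝ) : ℝ :=
  ∑ c, p c * (mpow (powerMix q (ρ c) t) (1 / (1 - t))).trace.re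

lemma posSemidef_powerMix (q : ProbVec δ) {ρ : δ → Matrix D D ℂ} (hρ : ∀ e, IsDensity (ρ e))
    (t : ℝ) : (powerMix q.1 ρ t).PosSemidef :=
  Matrix.posSemidef_sum _ fun e _ => (posSemidef_mpow (hρ e).1.isHermitian _).smul (q.2.1 e)

lemma re_trace_mpow_powerMix_nonneg (q : ProbVec δ) {ρ : δ → Matrix D D ℂ}
    (hρ : ∀ e, IsDensity (ρ e)) (t s : ℝ) : 0 ≤ (mpow (powerMix q.1 ρ t) s).trace.re :=
  re_trace_nonneg (posSemidef_mpow (posSemidef_powerMix q hρ t).isHermitian s)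

lemma renyiTrace_nonneg (p : ProbVec γ) (q : ProbVec δ) {ρ : γ → δ → Matrix D D ℂ}
    (hρ : ∀ c e, IsDensity (ρ c e)) (t : ℝ) : 0 ≤ renyiTrace p.1 q.1 ρ t :=
  Finset.sum_nonneg fun c _ =>
    mul_nonneg (p.2.1 c) (re_trace_mpow_powerMix_nonneg q (hρ c) t _)

lemma sum_mul_rpow_le_rpow_sum (p : ProbVec γ) {f : γ → ℝ} (hf : ∀ c, 0 ≤ f c) {s : ℝ}
    (hs0 : 0 ≤ s) (hs1 : s ≤ 1) : ∑ c, p.1 c * f c ^ s ≤ (∑ c, p.1 c * f c) ^ s :=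
  (Real.concaveOn_rpow hs0 hs1).le_map_sum (fun c _ => p.2.1 c) p.2.2 fun c _ => hf c

variable {α : Type*} [Fintype α] [DecidableEq α] [DecidableEq γ] [DecidableEq δ]

omit [Fintype γ] [Fintype δ] in
/-- A state `A` invariant under the stabilizer of `(u, v)` satisfies `A ≤ E` for the operator `E`
of that word, hence `A ≤ A ^ (1 - t) * E ^ t`, and the test trades `E ^ t` for `θ ^ t` times the
corresponding power for `u`. -/
lemma re_trace_one_sub_universalTest_mul_le {θ : ℝ} (hθ : 0 ≤ θ) {u : α → γ} {v : α → δ}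
    {A : Matrix (α → D) (α → D) ℂ} (hA : IsDensity A)
    (hAuv : ∀ g ∈ wordStabilizer fun k => (u k, v k), Commute (permRep α D g) A) {t : ℝ}
    (ht : t ∈ Set.Ioo 0 1) :
    ((1 - universalTest D θ u v) * A).trace.re ≤
      θ ^ t * (mpow A (1 - t) * mpow (wordSquareMean D u) t).trace.re := by
  let E := wordSquareMean D fun k => (u k, v k)
  have hE : E.PosSemidef := posSemidef_wordSquareMean _
  have hAE : Commute A E :=
    (commute_of_mem_groupAlgebra squareMean_mem_groupAlgebra hAuv).symm
  have hle : A ≤ E := by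
    simpa only [hA.2, Complex.one_re, one_smul] using le_re_trace_smul_wordSquareMean _ hA.1 hAuv
  calc ((1 - universalTest D θ u v) * A).trace.re
      ≤ ((1 - universalTest D θ u v) * (mpow A (1 - t) * mpow E t)).trace.re :=
        re_trace_mul_le_re_trace_mul (Matrix.le_iff.1 (universalTest_le_one θ u v))
          (le_mpow_mul_mpow hA.1 hE hAE hle ht.1 ht.2)
    _ = (mpow A (1 - t) * (mpow E t * (1 - universalTest D θ u v))).trace.re := by
        rw [Matrix.trace_mul_comm, mul_assoc]
    _ ≤ (mpow A (1 - t) * θ ^ t • mpow (wordSquareMean D u) t).trace.re :=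
        re_trace_mul_le_re_trace_mul (posSemidef_mpow hA.1.isHermitian _) <|
          mpow_mul_one_sub_neymanPearson_le hE (posSemidef_wordSquareMean u)
            (commute_wordSquareMean (wordStabilizer_pair_le u v)) hθ ht.1
    _ = _ := by rw [mul_smul_comm, Matrix.trace_smul, Complex.smul_re, smul_eq_mul]

omit [DecidableEq D] in
lemma isDensity_tensorFam {ρ : α → Matrix D D ℂ} (hρ : ∀ k, IsDensity (ρ k)) :
    IsDensity (tensorFam ρ) := by
  classical exact ⟨posSemidef_tensorFam fun k => (hρ k).1, by simp [trace_tensorFam, (hρ _).2]⟩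

omit [DecidableEq δ] in
lemma re_trace_tensorFam_powerMix_mul_mpow_le [Nonempty D] (q : ProbVec δ)
    {ρ : γ → δ → Matrix D D ℂ} (hρ : ∀ c e, IsDensity (ρ c e)) {t : ℝ} (ht : t ∈ Set.Ioo 0 1)
    (u : α → γ) :
    ((tensorFam fun k => powerMix q.1 (ρ (u k)) t) * mpow (wordSquareMean D u) t).trace.re ≤
      (((symmTables D (Fintype.card α)).card : ℝ) ^ Fintype.card γ) ^ t *
        ∏ k, (mpow (powerMix q.1 (ρ (u k)) t) (1 / (1 - t))).trace.re ^ (1 - t) := by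
  have hB (c : γ) : (powerMix q.1 (ρ c) t).PosSemidef := posSemidef_powerMix q (hρ c) t
  have hτ (c : γ) := re_trace_mpow_powerMix_nonneg q (hρ c) t (1 / (1 - t))
  have hcomm := commute_of_mem_groupAlgebra (squareMean_mem_groupAlgebra (π := permRep α D))
    fun g hg => commute_permRep_tensorFam (z := u) (fun c => powerMix q.1 (ρ c) t) hg
  refine (re_trace_mul_mpow_le (posSemidef_tensorFam fun k => hB (u k))
    (posSemidef_wordSquareMean u) hcomm.symm ht.1 ht.2).trans ?_
  rw [mpow_tensorFam (fun k => hB (u k)) (one_div_ne_zero (sub_pos.2 ht.2).ne'),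
    re_trace_tensorFam fun k => posSemidef_mpow (hB (u k)).isHermitian _, mul_comm,
    Real.finsetProd_rpow _ _ fun k _ => hτ (u k)]
  exact mul_le_mul_of_nonneg_right
    (Real.rpow_le_rpow (re_trace_nonneg (posSemidef_wordSquareMean u))
      (re_trace_wordSquareMean_le u) ht.1.le)
    (Real.rpow_nonneg (Finset.prod_nonneg fun k _ => hτ (u k)) _)

lemma iidMean_re_trace_one_sub_universalTest_mul_le [Nonempty D] {θ : ℝ} (hθ : 0 ≤ θ)
    (q : ProbVec δ) {ρ : γ → δ → Matrix D D ℂ} (hρ : ∀ c e, IsDensity (ρ c e)) {t : ℝ}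
    (ht : t ∈ Set.Ioo 0 1) (u : α → γ) :
    iidMean q.1 (fun v => ((1 - universalTest D θ u v) *
        tensorFam fun k => ρ (u k) (v k)).trace.re) ≤
      (θ * ((symmTables D (Fintype.card α)).card : ℝ) ^ Fintype.card γ) ^ t *
        ∏ k, (mpow (powerMix q.1 (ρ (u k)) t) (1 / (1 - t))).trace.re ^ (1 - t) := by
  have hword (v : α → δ) := re_trace_one_sub_universalTest_mul_le hθ
    (isDensity_tensorFam fun k => hρ (u k) (v k)) (fun g hg =>
      commute_permRep_tensorFam (z := fun k => (u k, v k)) (fun ce => ρ ce.1 ce.2) hg) ht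
  calc _ ≤ iidMean q.1 (fun v => θ ^ t *
        (mpow (tensorFam fun k => ρ (u k) (v k)) (1 - t) * mpow (wordSquareMean D u) t).trace.re) :=
        iidMean_mono q.2.1 hword
    _ = θ ^ t * ((tensorFam fun k => powerMix q.1 (ρ (u k)) t) *
          mpow (wordSquareMean D u) t).trace.re := by
        simp only [powerMix, Matrix.trace_mul_comm _ (mpow (wordSquareMean D u) t),
          re_trace_tensorFam_mul_eq_iidMean, iidMean_const_mul,
          mpow_tensorFam (fun _ => (hρ _ _).1) (sub_pos.2 ht.2).ne']
    _ ≤ θ ^ t * _ := mul_le_mul_of_nonneg_left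
        (re_trace_tensorFam_powerMix_mul_mpow_le q hρ ht u) (Real.rpow_nonneg hθ _)
    _ = _ := by rw [Real.mul_rpow hθ (by positivity), mul_assoc]

lemma iidMean_iidMean_re_trace_one_sub_universalTest_mul_le [Nonempty D] {θ : ℝ} (hθ : 0 ≤ θ)
    (p : ProbVec γ) (q : ProbVec δ) {ρ : γ → δ → Matrix D D ℂ} (hρ : ∀ c e, IsDensity (ρ c e))
    {t : ℝ} (ht : t ∈ Set.Ioo 0 1) :
    iidMean p.1 (fun u : α → γ => iidMean q.1 fun v => ((1 - universalTest D θ u v) *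
        tensorFam fun k => ρ (u k) (v k)).trace.re) ≤
      (θ * ((symmTables D (Fintype.card α)).card : ℝ) ^ Fintype.card γ) ^ t *
        (renyiTrace p.1 q.1 ρ t ^ (1 - t)) ^ Fintype.card α := by
  have hτ (c : γ) := re_trace_mpow_powerMix_nonneg q (hρ c) t (1 / (1 - t))
  refine (iidMean_mono p.2.1 fun u =>
    iidMean_re_trace_one_sub_universalTest_mul_le hθ q hρ ht u).trans ?_
  rw [iidMean_const_mul, iidMean_prod p.1 fun c =>
    (mpow (powerMix q.1 (ρ c) t) (1 / (1 - t))).trace.re ^ (1 - t)]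
  refine mul_le_mul_of_nonneg_left (pow_le_pow_left₀ ?_ ?_ _) (by positivity)
  · exact Finset.sum_nonneg fun c _ => mul_nonneg (p.2.1 c) (Real.rpow_nonneg (hτ c) _)
  · exact sum_mul_rpow_le_rpow_sum p hτ (sub_pos.2 ht.2).le (by linarith [ht.1])

end RenyiBound

section TypeClasses

variable {C : Type*} [Fintype C] [DecidableEq C]

lemma card_piAntidiag_univ_le [Nonempty C] (m : ℕ) :
    (Finset.univ.piAntidiag m : Finset (C → ℕ)).card ≤ (m + 1) ^ (Fintype.card C - 1) := by
  obtain ⟨a⟩ := ‹Nonempty C›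
  have hcard : (Fintype.piFinset fun _ : {c // c ≠ a} => Finset.range (m + 1)).card =
      (m + 1) ^ (Fintype.card C - 1) := by simp
  rw [← hcard]
  refine Finset.card_le_card_of_injOn (fun T c => T c) (fun T hT => ?_) fun T hT T' hT' hTT' => ?_
  · have hsum : ∑ c, T c = m := (Finset.mem_piAntidiag.1 hT).1
    simpa [Nat.lt_succ_iff, ← hsum] using
      fun c _ => Finset.single_le_sum (fun _ _ => Nat.zero_le _) (Finset.mem_univ c)
  · have hne (c : C) (hc : c ≠ a) : T c = T' c := congrFun hTT' ⟨c, hc⟩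
    have hsum : ∑ c, T c = ∑ c, T' c :=
      (Finset.mem_piAntidiag.1 hT).1.trans (Finset.mem_piAntidiag.1 hT').1.symm
    rw [Fintype.sum_eq_add_sum_compl a, Fintype.sum_eq_add_sum_compl a,
      Finset.sum_congr rfl fun c hc => hne c (by simpa using hc)] at hsum
    funext c
    by_cases hc : c = a
    · exact hc ▸ Nat.add_right_cancel hsum
    · exact hne c hc

lemma pow_mul_factorial_le (k m : ℕ) : k ^ m * k.factorial ≤ k ^ k * m.factorial := by
  rcases le_total k m with h | h
  · calc k ^ m * k.factorial = k ^ k * (k.factorial * k ^ (m - k)) := by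
          rw [← pow_mul_pow_sub k h]; ring
      _ ≤ k ^ k * m.factorial := Nat.mul_le_mul_left _ (Nat.factorial_mul_pow_sub_le_factorial h)
  · have hfactorial : k.factorial ≤ m.factorial * k ^ (k - m) := by
      have hdesc := Nat.factorial_mul_descFactorial (Nat.sub_le k m)
      rw [Nat.sub_sub_self h] at hdesc
      exact hdesc ▸ Nat.mul_le_mul_left _ (Nat.descFactorial_le_pow _ _)
    calc k ^ m * k.factorial ≤ k ^ m * (m.factorial * k ^ (k - m)) :=
          Nat.mul_le_mul_left _ hfactorial
      _ = k ^ k * m.factorial := by rw [← pow_mul_pow_sub k h]; ring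

omit [DecidableEq C] in
lemma multinomial_mul_prod_pow_le {T T' : C → ℕ} (hsum : ∑ c, T' c = ∑ c, T c) :
    Nat.multinomial Finset.univ T' * ∏ c, T c ^ T' c ≤
      Nat.multinomial Finset.univ T * ∏ c, T c ^ T c := by
  have hspec := Nat.multinomial_spec Finset.univ T
  have hspec' := Nat.multinomial_spec Finset.univ T'
  have hprod : (∏ c, T c ^ T' c) * ∏ c, (T c).factorial ≤
      (∏ c, T c ^ T c) * ∏ c, (T' c).factorial := by
    simpa only [← Finset.prod_mul_distrib] using
      Finset.prod_le_prod' fun c _ => pow_mul_factorial_le (T c) (T' c)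
  refine Nat.le_of_mul_le_mul_left ?_ (Nat.factorial_pos (∑ c, T c))
  calc (∑ c, T c).factorial * (Nat.multinomial Finset.univ T' * ∏ c, T c ^ T' c)
      = Nat.multinomial Finset.univ T * Nat.multinomial Finset.univ T' *
          ((∏ c, T c ^ T' c) * ∏ c, (T c).factorial) := by rw [← hspec]; ring
    _ ≤ Nat.multinomial Finset.univ T * Nat.multinomial Finset.univ T' *
          ((∏ c, T c ^ T c) * ∏ c, (T' c).factorial) := Nat.mul_le_mul_left _ hprod
    _ = (∑ c, T c).factorial * (Nat.multinomial Finset.univ T * ∏ c, T c ^ T c) := by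
        rw [← hsum, ← hspec']; ring

omit [DecidableEq C] in
/-- The multinomial expansion has at most `(m + 1) ^ (|C| - 1)` terms, the largest being that
of `T` itself. -/
lemma pow_self_le_mul_multinomial [Nonempty C] {T : C → ℕ} {m : ℕ} (hT : ∑ c, T c = m) :
    m ^ m ≤ (m + 1) ^ (Fintype.card C - 1) *
      (Nat.multinomial Finset.univ T * ∏ c, T c ^ T c) := by
  classical
  nth_rw 1 [← hT]
  rw [Finset.sum_pow_eq_sum_piAntidiag]
  refine (Finset.sum_le_card_nsmul _ _ _ fun T' hT' => multinomial_mul_prod_pow_le ?_).trans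
    (Nat.mul_le_mul_right _ (card_piAntidiag_univ_le m))
  exact (Finset.mem_piAntidiag.1 hT').1.trans hT.symm

variable {α : Type*} [Fintype α] [DecidableEq α]

lemma card_filter_wordType_eq (s : α → C) :
    (Finset.univ.filter fun x : α → C => wordType x = wordType s).card =
      Nat.multinomial Finset.univ (wordType s) := by
  have horbit (x : α → C) :
      wordType x = wordType s ↔ x ∈ MulAction.orbit (Equiv.Perm α)ᵈᵐᵃ s := by
    refine ⟨fun h => ?_, ?_⟩
    · obtain ⟨τ, rfl⟩ := exists_eq_comp_of_wordType_eq h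
      exact ⟨DomMulAct.mk τ, rfl⟩
    · rintro ⟨τ, rfl⟩
      exact wordType_comp s (DomMulAct.mk.symm τ)
  have hstab : Nat.card (MulAction.stabilizer (Equiv.Perm α)ᵈᵐᵃ s) =
      ∏ c, (wordType s c).factorial :=
    calc _ = Nat.card {g : Equiv.Perm α // s ∘ g = s} :=
          Nat.card_congr (DomMulAct.mk.subtypeEquiv fun _ => DomMulAct.mem_stabilizer_iff.symm).symm
      _ = _ := by rw [Nat.card_eq_fintype_card, DomMulAct.stabilizer_card]; rfl
  have hgroup : Nat.card (Equiv.Perm α)ᵈᵐᵃ = (∑ c, wordType s c).factorial := by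
    rw [sum_wordType, ← Fintype.card_perm, ← Nat.card_eq_fintype_card]
    exact Nat.card_congr DomMulAct.mk.symm
  have hindex := (MulAction.stabilizer (Equiv.Perm α)ᵈᵐᵃ s).card_mul_index
  rw [MulAction.index_stabilizer, hstab, hgroup, ← Nat.multinomial_spec] at hindex
  rw [← Nat.eq_of_mul_eq_mul_left (Finset.prod_pos fun c _ => Nat.factorial_pos _) hindex,
    ← Set.ncard_coe_finset]
  congr 1
  ext x
  simp [horbit]

omit [DecidableEq α] in
lemma prod_comp_eq_prod_pow_wordType {M : Type*} [CommMonoid M] (Q : C → M) (x : α → C) :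
    ∏ k, Q (x k) = ∏ c, Q c ^ wordType x c := by
  simp [← Finset.prod_fiberwise' Finset.univ x Q, wordType, Fintype.card_subtype]

/-- The empirical distribution of the word `s`. -/
def empirical [Nonempty α] (s : α → C) : ProbVec C :=
  ⟨fun c => wordType s c / Fintype.card α, fun _ => by positivity, by
    rw [← Finset.sum_div, ← Nat.cast_sum, sum_wordType, div_self (by positivity)]⟩

omit [DecidableEq α] in
lemma prod_empirical [Nonempty α] (s : α → C) :
    ∏ k, (empirical s).1 (s k) =
      (∏ c, wordType s c ^ wordType s c : ℕ) / (Fintype.card α : ℝ) ^ Fintype.card α := by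
  rw [prod_comp_eq_prod_pow_wordType]
  simp only [empirical, div_pow, Finset.prod_div_distrib, Finset.prod_pow_eq_pow_sum, sum_wordType]
  push_cast
  rfl

lemma multinomial_mul_prod_mul_le_iidMean {Q : C → ℝ} (hQ : ∀ c, 0 ≤ Q c) {F : (α → C) → ℝ}
    (hF : ∀ s, 0 ≤ F s) (hFperm : ∀ s (g : Equiv.Perm α), F (s ∘ g) = F s) (s : α → C) :
    Nat.multinomial Finset.univ (wordType s) * ((∏ k, Q (s k)) * F s) ≤ iidMean Q F := by
  have hclass (x : α → C) (hx : x ∈ Finset.univ.filter fun x => wordType x = wordType s) :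
      (∏ k, Q (x k)) * F x = (∏ k, Q (s k)) * F s := by
    have htype : wordType x = wordType s := (Finset.mem_filter.1 hx).2
    obtain ⟨g, hg⟩ := exists_eq_comp_of_wordType_eq htype
    rw [prod_comp_eq_prod_pow_wordType, htype, ← prod_comp_eq_prod_pow_wordType, hg, hFperm]
  rw [← card_filter_wordType_eq, ← nsmul_eq_mul, ← Finset.sum_const, ← Finset.sum_congr rfl hclass]
  exact Finset.sum_le_sum_of_subset_of_nonneg (Finset.filter_subset _ _)
    fun x _ _ => mul_nonneg (Finset.prod_nonneg fun _ _ => hQ _) (hF x)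

lemma le_mul_iidMean_empirical [Nonempty α] {F : (α → C) → ℝ} (hF : ∀ s, 0 ≤ F s)
    (hFperm : ∀ s (g : Equiv.Perm α), F (s ∘ g) = F s) (s : α → C) :
    F s ≤ ((Fintype.card α : ℝ) + 1) ^ (Fintype.card C - 1) * iidMean (empirical s).1 F := by
  have : Nonempty C := ‹Nonempty α›.map s
  let n := Fintype.card α
  let N := Nat.multinomial Finset.univ (wordType s)
  let W := ∏ c, wordType s c ^ wordType s c
  have hn : (0 : ℝ) < (n : ℝ) ^ n := by positivity
  have hNW : (n : ℝ) ^ n ≤ ((n : ℝ) + 1) ^ (Fintype.card C - 1) * (N * W) := mod_cast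
    pow_self_le_mul_multinomial (sum_wordType s)
  calc F s ≤ ((n : ℝ) + 1) ^ (Fintype.card C - 1) * (N * W) / (n : ℝ) ^ n * F s :=
        le_mul_of_one_le_left (hF s) ((one_le_div hn).2 hNW)
    _ = ((n : ℝ) + 1) ^ (Fintype.card C - 1) *
          (N * ((∏ k, (empirical s).1 (s k)) * F s)) := by rw [prod_empirical]; ring
    _ ≤ _ := mul_le_mul_of_nonneg_left
        (multinomial_mul_prod_mul_le_iidMean (empirical s).2.1 hF hFperm s) (by positivity)

end TypeClasses

section TypeIError

variable {D γ δ S α : Type*} [Fintype D] [DecidableEq D] [Fintype γ] [DecidableEq γ] [Fintype δ]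
  [DecidableEq δ] [Fintype α] [DecidableEq α]

omit [Fintype γ] [Fintype δ] in
lemma re_trace_one_sub_universalTest_mul_comp_perm (θ : ℝ) (u : α → γ) (v : α → δ)
    (ρ : α → Matrix D D ℂ) (g : Equiv.Perm α) :
    ((1 - universalTest D θ (u ∘ g) (v ∘ g)) * tensorFam (ρ ∘ g)).trace.re =
      ((1 - universalTest D θ u v) * tensorFam ρ).trace.re := by
  have hcancel (A : Matrix (α → D) (α → D) ℂ) : permRep α D g⁻¹ * (permRep α D g * A) = A := by
    rw [← mul_assoc, ← map_mul, inv_mul_cancel, map_one, one_mul]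
  have htest := permRep_conj_universalTest (D := D) θ (u ∘ g) (v ∘ g) g
  have hstate := permRep_conj_tensorFam g (ρ ∘ g)
  simp only [Function.comp_assoc, ← Equiv.Perm.coe_mul, mul_inv_cancel, Equiv.Perm.coe_one,
    Function.comp_id] at htest hstate
  have hprod : (1 - universalTest D θ u v) * tensorFam ρ =
      permRep α D g * (((1 - universalTest D θ (u ∘ g) (v ∘ g)) * tensorFam (ρ ∘ g)) *
        permRep α D g⁻¹) := by
    simp only [← htest, ← hstate, sub_mul, mul_sub, one_mul, mul_assoc, hcancel]
  rw [hprod, Matrix.trace_mul_comm (permRep α D g), mul_assoc, ← map_mul, inv_mul_cancel,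
    map_one, mul_one]

/-- The error of the first kind of the universal test of threshold `θ`: the probability of
rejecting the product state of the state word `s`, for independent letters with weights `p`, `q`. -/
def typeIError (θ : ℝ) (p : γ → ℝ) (q : δ → ℝ) (ρ : γ → δ → S → Matrix D D ℂ) (s : α → S) : ℝ :=
  iidMean p fun u => iidMean q fun v =>
    ((1 - universalTest D θ u v) * tensorFam fun k => ρ (u k) (v k) (s k)).trace.re

variable {θ : ℝ}

lemma typeIError_nonneg {p : γ → ℝ} (hp : ∀ c, 0 ≤ p c) {q : δ → ℝ} (hq : ∀ e, 0 ≤ q e)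
    {ρ : γ → δ → S → Matrix D D ℂ} (hρ : ∀ c e s, IsDensity (ρ c e s)) (s : α → S) :
    0 ≤ typeIError θ p q ρ s :=
  iidMean_nonneg hp fun u => iidMean_nonneg hq fun v => re_trace_mul_nonneg
    (Matrix.le_iff.1 (universalTest_le_one θ u v)) (posSemidef_tensorFam fun _ => (hρ _ _ _).1)

lemma typeIError_comp_perm (p : γ → ℝ) (q : δ → ℝ) (ρ : γ → δ → S → Matrix D D ℂ) (s : α → S)
    (g : Equiv.Perm α) : typeIError θ p q ρ (s ∘ g) = typeIError θ p q ρ s := by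
  unfold typeIError
  rw [← iidMean_comp_perm p _ g]
  refine congrArg (iidMean p) (funext fun u => ?_)
  rw [← iidMean_comp_perm q _ g]
  exact congrArg (iidMean q) (funext fun v => re_trace_one_sub_universalTest_mul_comp_perm θ u v
    (fun k => ρ (u k) (v k) (s k)) g)

variable [Fintype S]

lemma iidMean_typeIError (p : γ → ℝ) (q : δ → ℝ) (ρ : γ → δ → S → Matrix D D ℂ) (Q : S → ℝ) :
    (iidMean Q fun s : α → S => typeIError θ p q ρ s) =
      iidMean p fun u : α → γ => iidMean q fun v : α → δ =>
        ((1 - universalTest D θ u v) * tensorFam fun k => ∑ s, Q s • ρ (u k) (v k) s).trace.re := by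
  unfold typeIError
  rw [iidMean_comm]
  refine congrArg (iidMean p) (funext fun u => ?_)
  rw [iidMean_comm]
  exact congrArg (iidMean q) (funext fun v =>
    (re_trace_tensorFam_mul_eq_iidMean _ _ _).symm)

omit [DecidableEq D] in
lemma isDensity_sum_smul (Q : ProbVec S) {ρ : S → Matrix D D ℂ} (hρ : ∀ s, IsDensity (ρ s)) :
    IsDensity (∑ s, Q.1 s • ρ s) := by
  refine ⟨Matrix.posSemidef_sum _ fun s _ => (hρ s).1.smul (Q.2.1 s), ?_⟩
  simp only [Matrix.trace_sum, Matrix.trace_smul, (hρ _).2, ← Finset.sum_smul, Q.2.2, one_smul]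

lemma exists_typeIError_le [Nonempty D] [Nonempty α] (hθ : 0 ≤ θ) (p : ProbVec γ) (q : ProbVec δ)
    {ρ : γ → δ → S → Matrix D D ℂ} (hρ : ∀ c e s, IsDensity (ρ c e s)) {t : ℝ}
    (ht : t ∈ Set.Ioo 0 1) (s : α → S) :
    ∃ Q : ProbVec S, typeIError θ p.1 q.1 ρ s ≤
      ((Fintype.card α : ℝ) + 1) ^ (Fintype.card S - 1) *
        ((θ * ((symmTables D (Fintype.card α)).card : ℝ) ^ Fintype.card γ) ^ t *
          (renyiTrace p.1 q.1 (fun c e => ∑ s, Q.1 s • ρ c e s) t ^ (1 - t)) ^ Fintype.card α) := by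
  classical
  refine ⟨empirical s, (le_mul_iidMean_empirical (typeIError_nonneg p.2.1 q.2.1 hρ)
    (typeIError_comp_perm p.1 q.1 ρ) s).trans (mul_le_mul_of_nonneg_left ?_ (by positivity))⟩
  rw [iidMean_typeIError]
  exact iidMean_iidMean_re_trace_one_sub_universalTest_mul_le hθ p q
    (fun c e => isDensity_sum_smul _ (hρ c e)) ht

end TypeIError

section RenyiInformation

variable {D γ δ S : Type*} [Fintype D] [DecidableEq D] [Fintype γ] [Fintype δ] [Fintype S]

/-- The Rényi information `I_{1-t}[δ; B | γ]` of the states `ρ` on `B`, with independent letters of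
weights `p` on `γ` and `q` on `δ`. -/
def condRenyi (p : γ → ℝ) (q : δ → ℝ) (ρ : γ → δ → Matrix D D ℂ) (t : ℝ) : ℝ :=
  -((1 - t) / t) * Real.logb 2 (renyiTrace p q ρ t)

lemma powerMix_le_one (q : ProbVec δ) {ρ : δ → Matrix D D ℂ} (hρ : ∀ e, IsDensity (ρ e)) {t : ℝ}
    (ht : t < 1) : powerMix q.1 ρ t ≤ 1 := by
  have hmpow (e : δ) : mpow (ρ e) (1 - t) ≤ 1 := by
    have hle := le_re_trace_smul_one (hρ e).1
    rw [(hρ e).2, Complex.one_re, one_smul] at hle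
    exact mpow_le_one (hρ e).1 hle (sub_pos.2 ht)
  calc powerMix q.1 ρ t ≤ ∑ e, q.1 e • (1 : Matrix D D ℂ) :=
        Finset.sum_le_sum fun e _ => smul_le_smul_of_nonneg_left (hmpow e) (q.2.1 e)
    _ = 1 := by rw [← Finset.sum_smul, q.2.2, one_smul]

lemma renyiTrace_le_card (p : ProbVec γ) (q : ProbVec δ) {ρ : γ → δ → Matrix D D ℂ}
    (hρ : ∀ c e, IsDensity (ρ c e)) {t : ℝ} (ht : t < 1) :
    renyiTrace p.1 q.1 ρ t ≤ Fintype.card D := by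
  have htrace (c : γ) : (mpow (powerMix q.1 (ρ c) t) (1 / (1 - t))).trace.re ≤ Fintype.card D := by
    simpa using re_trace_mul_le_re_trace_mul Matrix.PosSemidef.one
      (mpow_le_one (posSemidef_powerMix q (hρ c) t) (powerMix_le_one q (hρ c) ht)
        (one_div_pos.2 (sub_pos.2 ht)))
  calc renyiTrace p.1 q.1 ρ t ≤ ∑ c, p.1 c * (Fintype.card D : ℝ) :=
        Finset.sum_le_sum fun c _ => mul_le_mul_of_nonneg_left (htrace c) (p.2.1 c)
    _ = Fintype.card D := by rw [← Finset.sum_mul, p.2.2, one_mul]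

lemma bddBelow_range_condRenyi (p : ProbVec γ) (q : ProbVec δ) {ρ : γ → δ → S → Matrix D D ℂ}
    (hρ : ∀ c e s, IsDensity (ρ c e s)) {t : ℝ} (ht : t ∈ Set.Ioo 0 1) :
    BddBelow (Set.range fun Q : ProbVec S =>
      condRenyi p.1 q.1 (fun c e => ∑ s, Q.1 s • ρ c e s) t) := by
  refine ⟨-((1 - t) / t) * max 0 (Real.logb 2 (Fintype.card D)), ?_⟩
  rintro _ ⟨Q, rfl⟩
  have hmix (c : γ) (e : δ) := isDensity_sum_smul Q (hρ c e)
  refine mul_le_mul_of_nonpos_left ?_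
    (neg_nonpos.2 (div_nonneg (sub_pos.2 ht.2).le ht.1.le))
  rcases (renyiTrace_nonneg p q hmix t).eq_or_lt with hzero | hpos
  · rw [← hzero, Real.logb_zero]
    exact le_max_left _ _
  · exact le_max_of_le_right
      (Real.logb_le_logb_of_le one_lt_two hpos (renyiTrace_le_card p q hmix ht.2))

lemma rpow_one_sub_pow_le {n : ℕ} (hn : n ≠ 0) {a t I : ℝ} (ha : 0 ≤ a) (ht : t ∈ Set.Ioo 0 1)
    (hI : I ≤ -((1 - t) / t) * Real.logb 2 a) :
    (a ^ (1 - t)) ^ n ≤ (2 : ℝ) ^ (-(n * t * I)) := by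
  have ht0 : 0 < t := ht.1
  rcases ha.eq_or_lt with rfl | hpos
  · rw [Real.zero_rpow (sub_pos.2 ht.2).ne', zero_pow hn]
    positivity
  · calc (a ^ (1 - t)) ^ n = a ^ ((1 - t) * n) := by rw [Real.rpow_mul ha, Real.rpow_natCast]
      _ = (2 : ℝ) ^ (Real.logb 2 a * ((1 - t) * n)) := by
          rw [Real.rpow_mul zero_le_two, Real.rpow_logb two_pos one_lt_two.ne' hpos]
      _ = (2 : ℝ) ^ (-(n * t * (-((1 - t) / t) * Real.logb 2 a))) := by
          congr 1
          field_simp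
      _ ≤ (2 : ℝ) ^ (-(n * t * I)) :=
          Real.rpow_le_rpow_of_exponent_le one_le_two
            (neg_le_neg (mul_le_mul_of_nonneg_left hI (by positivity)))

lemma renyiTrace_rpow_pow_le {n : ℕ} (hn : n ≠ 0) (p : ProbVec γ) (q : ProbVec δ)
    {ρ : γ → δ → S → Matrix D D ℂ} (hρ : ∀ c e s, IsDensity (ρ c e s)) {t : ℝ}
    (ht : t ∈ Set.Ioo 0 1) (Q : ProbVec S) :
    (renyiTrace p.1 q.1 (fun c e => ∑ s, Q.1 s • ρ c e s) t ^ (1 - t)) ^ n ≤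
      (2 : ℝ) ^ (-(n * t *
        ⨅ Q : ProbVec S, condRenyi p.1 q.1 (fun c e => ∑ s, Q.1 s • ρ c e s) t)) :=
  rpow_one_sub_pow_le hn (renyiTrace_nonneg p q (fun c e => isDensity_sum_smul Q (hρ c e)) t) ht
    (ciInf_le (bddBelow_range_condRenyi p q hρ ht) Q)

variable {𝒳 𝒴 : Type*} [Fintype 𝒳] [Fintype 𝒴] {d : ℕ}

lemma renyiXY_eq_condRenyi (PX : 𝒳 → ℝ) (PY : 𝒴 → ℝ) (ρ : 𝒳 → 𝒴 → Matrix (Fin d) (Fin d) ℂ)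
    (t : ℝ) : renyiXY PX PY ρ t =
      condRenyi (fun _ : Unit => 1) (fun c : 𝒳 × 𝒴 => PX c.1 * PY c.2)
        (fun _ c => ρ c.1 c.2) t := by
  simp [renyiXY, condRenyi, renyiTrace, powerMix, Fintype.sum_prod_type]

end RenyiInformation

section Counting

variable {D : Type*} [Fintype D] [DecidableEq D]

lemma two_mul_le_of_mem_symmTables {n : ℕ} {T : D × D → ℕ} (hT : T ∈ symmTables D n) {c : D × D}
    (hc : c.1 ≠ c.2) : 2 * T c ≤ n := by
  obtain ⟨hsum, hsymm⟩ := mem_symmTables.1 hT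
  have hswap : c ≠ c.swap := fun h => hc (congrArg Prod.fst h)
  calc 2 * T c = ∑ e ∈ {c, c.swap}, T e := by rw [Finset.sum_pair hswap, hsymm, two_mul]
    _ ≤ n := hsum ▸ Finset.sum_le_univ_sum_of_nonneg fun _ => Nat.zero_le _

/-- A symmetric table of total `n` is determined by its off-diagonal entries, which are at most
`n / 2` as each occurs twice, and by its row sums. -/
lemma card_symmTables_le (n : ℕ) :
    (symmTables D n).card ≤ (n / 2 + 1) ^ (Fintype.card D).choose 2 *
      (Finset.univ.piAntidiag n : Finset (D → ℕ)).card := by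
  let entry (T : D × D → ℕ) (e : {e : Sym2 D // ¬e.IsDiag}) : ℕ := T (Quot.out e.1)
  have hentry {T : D × D → ℕ} (hT : ∀ c, T c.swap = T c) {a b : D} (hab : a ≠ b) :
      T (a, b) = entry T ⟨s(a, b), by simpa using hab⟩ := by
    rcases Sym2.rel_iff'.1 (Sym2.eq.1 (Quot.out_eq s(a, b))) with h | h
    · exact (congrArg T h).symm
    · exact ((congrArg T h).trans (hT (a, b))).symm
  have hcard : (Fintype.piFinset fun _ : {e : Sym2 D // ¬e.IsDiag} =>
      Finset.range (n / 2 + 1)).card = (n / 2 + 1) ^ (Fintype.card D).choose 2 := by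
    rw [Fintype.card_piFinset, Finset.prod_const, Finset.card_range, Finset.card_univ,
      Sym2.card_subtype_not_diag]
  rw [← hcard, ← Finset.card_product]
  refine Finset.card_le_card_of_injOn (fun T => (entry T, fun a => ∑ b, T (a, b)))
    (fun T hT => ?_) fun T hT T' hT' hTT' => ?_
  · obtain ⟨hsum, hsymm⟩ := mem_symmTables.1 hT
    rw [Fintype.sum_prod_type] at hsum
    have hoff (e : {e : Sym2 D // ¬e.IsDiag}) : (Quot.out e.1).1 ≠ (Quot.out e.1).2 := by
      have he := e.2
      rwa [← Quot.out_eq e.1] at he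
    refine Finset.mem_coe.2 (Finset.mem_product.2 ⟨Fintype.mem_piFinset.2 fun e => ?_,
      Finset.mem_piAntidiag.2 ⟨hsum, fun _ _ => Finset.mem_univ _⟩⟩)
    have hle := two_mul_le_of_mem_symmTables hT (hoff e)
    exact Finset.mem_range.2 (by simp only [entry]; omega)
  · obtain ⟨hoff, hrow⟩ := Prod.mk.inj hTT'
    obtain ⟨-, hsymm⟩ := mem_symmTables.1 hT
    obtain ⟨-, hsymm'⟩ := mem_symmTables.1 hT'
    have hne {a b : D} (hab : a ≠ b) : T (a, b) = T' (a, b) := by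
      rw [hentry hsymm hab, hentry hsymm' hab, hoff]
    funext ⟨a, b⟩
    by_cases hab : a = b
    · subst hab
      have hrow := congrFun hrow a
      simp only [Fintype.sum_eq_add_sum_compl a] at hrow
      rw [Finset.sum_congr rfl fun c hc => hne (by simpa [eq_comm] using hc)] at hrow
      exact Nat.add_right_cancel hrow
    · exact hne hab

lemma card_piAntidiag_univ (n : ℕ) :
    (Finset.univ.piAntidiag n : Finset (D → ℕ)).card = (Fintype.card D + n - 1).choose n := by
  rw [← Finset.map_sym_eq_piAntidiag, Finset.card_map, Finset.sym_univ, Finset.card_univ,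
    Sym.card_sym_eq_choose]

/-- The partition of `n` whose parts are the nonzero values of a function of total `n`. -/
def partitionOfValues {n : ℕ} (a : D → ℕ) (ha : ∑ c, a c = n) : n.Partition :=
  .ofSums n (Finset.univ.val.map a) ha

omit [DecidableEq D] in
lemma count_parts_partitionOfValues {n : ℕ} {a : D → ℕ} (ha : ∑ c, a c = n) {i : ℕ} (hi : i ≠ 0) :
    (partitionOfValues a ha).parts.count i = wordType a i := by
  refine (Nat.Partition.count_ofSums_of_ne_zero ha hi).trans ?_
  simp [Multiset.count_map, wordType, Fintype.card_subtype, Finset.card_def, eq_comm]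

omit [DecidableEq D] in
lemma card_parts_partitionOfValues {n : ℕ} {a : D → ℕ} (ha : ∑ c, a c = n) :
    (partitionOfValues a ha).parts.card + wordType a 0 = Fintype.card D := by
  have hsplit := congrArg Multiset.card (Multiset.filter_add_not (· ≠ 0) (Finset.univ.val.map a))
  have hzero : ((Finset.univ.val.map a).filter fun i => ¬i ≠ 0).card = wordType a 0 := by
    simp [wordType, Fintype.card_subtype, Finset.card_def, Multiset.filter_map]
  rwa [Multiset.card_add, hzero, Multiset.card_map] at hsplit

omit [DecidableEq D] in
lemma wordType_eq_of_partitionOfValues_eq {n : ℕ} {a b : D → ℕ} (ha : ∑ c, a c = n)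
    (hb : ∑ c, b c = n) (h : partitionOfValues a ha = partitionOfValues b hb) :
    wordType a = wordType b := by
  funext i
  rcases eq_or_ne i 0 with rfl | hi
  · have hcard := (card_parts_partitionOfValues ha).trans (card_parts_partitionOfValues hb).symm
    rw [h] at hcard
    exact Nat.add_left_cancel hcard
  · rw [← count_parts_partitionOfValues ha hi, h, count_parts_partitionOfValues hb hi]

lemma card_piAntidiag_univ_le_factorial_mul (n : ℕ) :
    (Finset.univ.piAntidiag n : Finset (D → ℕ)).card ≤
      (Fintype.card D).factorial * numPartLe n (Fintype.card D) := by
  have hsum (a : (Finset.univ.piAntidiag n : Finset (D → ℕ))) : ∑ c, a.1 c = n :=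
    (Finset.mem_piAntidiag.1 a.2).1
  let shape (a : (Finset.univ.piAntidiag n : Finset (D → ℕ))) :
      {p : n.Partition // p.parts.card ≤ Fintype.card D} :=
    ⟨partitionOfValues a.1 (hsum a), Nat.le.intro (card_parts_partitionOfValues (hsum a))⟩
  rw [numPartLe, Nat.card_eq_fintype_card, ← Finset.card_univ (α := Subtype _),
    ← Fintype.card_coe, ← Finset.card_univ]
  refine Finset.card_le_mul_card_image_of_maps_to (f := shape) (fun _ _ => Finset.mem_univ _) _
    fun p _ => ?_
  rcases (Finset.univ.filter fun a => shape a = p).eq_empty_or_nonempty with hempty | ⟨a, ha⟩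
  · exact hempty ▸ Nat.zero_le _
  · rw [← Fintype.card_perm, ← Finset.card_univ (α := Equiv.Perm D)]
    refine Finset.card_le_card_of_forall_subsingleton
      (fun b (τ : Equiv.Perm D) => b.1 = a.1 ∘ τ) (fun b hb => ?_)
      fun τ _ b hb b' hb' => Subtype.ext (hb.2.trans hb'.2.symm)
    have hba := (Finset.mem_filter.1 hb).2.trans (Finset.mem_filter.1 ha).2.symm
    obtain ⟨τ, hτ⟩ := exists_eq_comp_of_wordType_eq
      (wordType_eq_of_partitionOfValues_eq (hsum b) (hsum a) (Subtype.ext_iff.1 hba))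
    exact ⟨τ, Finset.mem_univ τ, hτ⟩

lemma factorial_le_two_pow_choose_two (d : ℕ) : d.factorial ≤ 2 ^ d.choose 2 := by
  induction d with
  | zero => rfl
  | succ d ih =>
    rw [Nat.factorial_succ, Nat.choose_succ_succ' d 1, Nat.choose_one_right, pow_add]
    exact Nat.mul_le_mul Nat.lt_two_pow_self ih

lemma card_symmTables_le_pow [Nonempty D] (n : ℕ) :
    (symmTables D n).card ≤ (n + 1) ^ ((Fintype.card D).choose 2 + (Fintype.card D - 1)) := by
  rw [pow_add]
  exact (card_symmTables_le n).trans
    (Nat.mul_le_mul (Nat.pow_le_pow_left (by omega) _) (card_piAntidiag_univ_le n))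

lemma two_mul_sq_half_add_one_le {n : ℕ} (hn : n ≠ 0) (hn2 : n ≠ 2) :
    2 * (n / 2 + 1) ^ 2 ≤ n * (n + 1) := by
  rcases n.even_or_odd' with ⟨k, rfl | rfl⟩
  · rw [Nat.mul_div_cancel_left k two_pos]
    have hk : 2 ≤ k := by omega
    nlinarith
  · rw [show (2 * k + 1) / 2 = k by omega]
    nlinarith

lemma two_pow_choose_two_mul_sq_le (d : ℕ) :
    2 ^ (d + 1).choose 2 * (d + 2).choose 2 ^ 2 ≤ 2 * 3 ^ ((d + 1).choose 2 + d) := by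
  induction d with
  | zero => decide
  | succ d ih =>
    obtain - | d := d
    · decide
    have hchoose : (d + 4).choose 2 ≤ 2 * (d + 3).choose 2 := by
      have hpos : 0 < (d + 2).choose 2 := Nat.choose_pos (Nat.le_add_left 2 d)
      have hsucc : (d + 4).choose 2 = d + 3 + (d + 3).choose 2 := by
        rw [Nat.choose_succ_succ' (d + 3) 1, Nat.choose_one_right]
      have hpred : (d + 3).choose 2 = d + 2 + (d + 2).choose 2 := by
        rw [Nat.choose_succ_succ' (d + 2) 1, Nat.choose_one_right]
      omega
    calc 2 ^ (d + 3).choose 2 * (d + 4).choose 2 ^ 2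
        ≤ 2 ^ (d + 3).choose 2 * (2 * (d + 3).choose 2) ^ 2 := by gcongr
      _ = 2 ^ (d + 2).choose 2 * (d + 3).choose 2 ^ 2 * (16 * 2 ^ d) := by
          rw [Nat.choose_succ_succ' (d + 2) 1, Nat.choose_one_right]
          ring
      _ ≤ 2 * 3 ^ ((d + 2).choose 2 + (d + 1)) * (27 * 3 ^ d) := by
          gcongr <;> norm_num
      _ = 2 * 3 ^ ((d + 3).choose 2 + (d + 2)) := by
          rw [Nat.choose_succ_succ' (d + 2) 1, Nat.choose_one_right]
          ring

lemma numPartLe_pos (n : ℕ) {d : ℕ} (hd : d ≠ 0) : 0 < numPartLe n d := by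
  have hcard : (Nat.Partition.indiscrete n).parts.card ≤ 1 :=
    (Multiset.card_le_card (Multiset.filter_le _ _)).trans_eq (Multiset.card_singleton n)
  have : Nonempty {p : n.Partition // p.parts.card ≤ d} :=
    ⟨.indiscrete n, hcard.trans (Nat.one_le_iff_ne_zero.2 hd)⟩
  exact Nat.card_pos

lemma two_le_numPartLe_two {d : ℕ} (hd : 2 ≤ d) : 2 ≤ numPartLe 2 d := by
  have : Nontrivial {p : Nat.Partition 2 // p.parts.card ≤ d} :=
    ⟨⟨⟨{2}, by simp, rfl⟩, one_le_two.trans hd⟩, ⟨⟨{1, 1}, by simp, rfl⟩, hd⟩, fun h =>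
      absurd (congrArg (fun p => p.1.parts.card) h) (by simp)⟩
  exact Finite.one_lt_card

lemma card_symmTables_sq_le_of_ne_two [Nonempty D] {n : ℕ} (hn : n ≠ 0) (hn2 : n ≠ 2) :
    (symmTables D n).card ^ 2 ≤
      n ^ (Fintype.card D).choose 2 * numPartLe n (Fintype.card D) *
        (n + 1) ^ ((Fintype.card D).choose 2 + (Fintype.card D - 1)) := by
  set d := Fintype.card D
  set W := (Finset.univ.piAntidiag n : Finset (D → ℕ)).card
  have hW : W ≤ 2 ^ d.choose 2 * numPartLe n d :=
    (card_piAntidiag_univ_le_factorial_mul n).trans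
      (Nat.mul_le_mul_right _ (factorial_le_two_pow_choose_two d))
  calc (symmTables D n).card ^ 2 ≤ ((n / 2 + 1) ^ d.choose 2 * W) ^ 2 :=
        Nat.pow_le_pow_left (card_symmTables_le n) 2
    _ = ((n / 2 + 1) ^ 2) ^ d.choose 2 * (W * W) := by rw [mul_pow, pow_right_comm, sq W]
    _ ≤ ((n / 2 + 1) ^ 2) ^ d.choose 2 *
          (2 ^ d.choose 2 * numPartLe n d * (n + 1) ^ (d - 1)) :=
        Nat.mul_le_mul_left _ (Nat.mul_le_mul hW (card_piAntidiag_univ_le n))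
    _ = (2 * (n / 2 + 1) ^ 2) ^ d.choose 2 * (numPartLe n d * (n + 1) ^ (d - 1)) := by
        rw [mul_pow 2]
        ring
    _ ≤ (n * (n + 1)) ^ d.choose 2 * (numPartLe n d * (n + 1) ^ (d - 1)) := by
        gcongr ?_ ^ _ * _
        exact two_mul_sq_half_add_one_le hn hn2
    _ = n ^ d.choose 2 * numPartLe n d * (n + 1) ^ (d.choose 2 + (d - 1)) := by
        rw [mul_pow]
        ring

lemma card_symmTables_two_sq_le [Nonempty D] :
    (symmTables D 2).card ^ 2 ≤
      2 ^ (Fintype.card D).choose 2 * numPartLe 2 (Fintype.card D) *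
        3 ^ ((Fintype.card D).choose 2 + (Fintype.card D - 1)) := by
  have hle := card_symmTables_le (D := D) 2
  obtain ⟨d, hd⟩ := Nat.exists_eq_add_of_lt (Fintype.card_pos (α := D))
  rw [card_piAntidiag_univ, hd] at hle
  rw [hd]
  simp only [zero_add, add_tsub_cancel_right] at hle ⊢
  obtain - | d := d
  · calc (symmTables D 2).card ^ 2 ≤ 1 ^ 2 := Nat.pow_le_pow_left hle 2
      _ ≤ 2 ^ Nat.choose 1 2 * numPartLe 2 1 * 3 ^ (Nat.choose 1 2 + 0) := by
          simpa [Nat.one_le_iff_ne_zero] using (numPartLe_pos 2 one_ne_zero).ne'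
  · calc (symmTables D 2).card ^ 2 ≤ (2 ^ (d + 2).choose 2 * (d + 3).choose 2) ^ 2 :=
          Nat.pow_le_pow_left hle 2
      _ = 2 ^ (d + 2).choose 2 * (2 ^ (d + 2).choose 2 * (d + 3).choose 2 ^ 2) := by ring
      _ ≤ 2 ^ (d + 2).choose 2 * (2 * 3 ^ ((d + 2).choose 2 + (d + 1))) :=
          Nat.mul_le_mul_left _ (two_pow_choose_two_mul_sq_le (d + 1))
      _ ≤ 2 ^ (d + 2).choose 2 * numPartLe 2 (d + 2) * 3 ^ ((d + 2).choose 2 + (d + 1)) := by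
          rw [← mul_assoc]
          gcongr
          exact two_le_numPartLe_two (Nat.le_add_left 2 d)

lemma card_symmTables_sq_le [Nonempty D] {n : ℕ} (hn : n ≠ 0) :
    (symmTables D n).card ^ 2 ≤
      n ^ (Fintype.card D).choose 2 * numPartLe n (Fintype.card D) *
        (n + 1) ^ ((Fintype.card D).choose 2 + (Fintype.card D - 1)) := by
  rcases eq_or_ne n 2 with rfl | hn2
  · exact card_symmTables_two_sq_le
  · exact card_symmTables_sq_le_of_ne_two hn hn2

end Counting

section Threshold

lemma IsDensity.nonempty {m : Type*} [Fintype m] {σ : Matrix m m ℂ} (hσ : IsDensity σ) :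
    Nonempty m := by
  by_contra hempty
  rw [not_nonempty_iff] at hempty
  simpa [Matrix.trace] using hσ.2

variable {n d : ℕ}

lemma gFac_eq (n c d : ℕ) : gFac n c d = ((n : ℝ) ^ d.choose 2 * numPartLe n d) ^ c := by
  rw [gFac, mul_pow, ← pow_mul, ← Real.rpow_natCast (n : ℝ), Nat.cast_mul, Nat.cast_choose_two]
  ring_nf

lemma gFac_pos (hn : n ≠ 0) (c : ℕ) (hd : d ≠ 0) : 0 < gFac n c d := by
  have hpart := numPartLe_pos n hd
  rw [gFac_eq]
  positivity

lemma card_symmTables_pos {D : Type*} [Fintype D] [DecidableEq D] [Nonempty D] (n : ℕ) :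
    0 < (symmTables D n).card := by
  have hzero : (0 : D × D → ℕ) ∈ symmTables D 0 := mem_symmTables.2 (by simp)
  exact (Finset.card_pos.2 ⟨0, hzero⟩).trans_le (card_symmTables_mono n.zero_le)

lemma card_symmTables_pow_div_gFac_mul_le [Nonempty (Fin d)] (hn : n ≠ 0) (a : ℕ) {b : ℕ}
    (hb : b ≠ 0) :
    ((symmTables (Fin d) n).card : ℝ) ^ (a * b) / gFac n a d * (symmTables (Fin d) n).card ^ a ≤
      ((n : ℝ) + 1) ^ (a * b * (d.choose 2 + (d - 1))) := by
  have hd : d ≠ 0 := (Fin.pos_iff_nonempty.2 ‹_›).ne'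
  have hcard : ((symmTables (Fin d) n).card : ℝ) ≤ ((n : ℝ) + 1) ^ (d.choose 2 + (d - 1)) := by
    exact_mod_cast Fintype.card_fin d ▸ card_symmTables_le_pow (D := Fin d) n
  have hsq : ((symmTables (Fin d) n).card : ℝ) ^ 2 ≤
      (n : ℝ) ^ d.choose 2 * numPartLe n d * ((n : ℝ) + 1) ^ (d.choose 2 + (d - 1)) := by
    exact_mod_cast Fintype.card_fin d ▸ card_symmTables_sq_le (D := Fin d) hn
  rw [div_mul_eq_mul_div, div_le_iff₀ (gFac_pos hn a hd), gFac_eq]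
  obtain ⟨b, rfl⟩ := Nat.exists_eq_succ_of_ne_zero hb
  set r := ((symmTables (Fin d) n).card : ℝ)
  set E := d.choose 2 + (d - 1)
  set G := (n : ℝ) ^ d.choose 2 * numPartLe n d
  calc r ^ (a * (b + 1)) * r ^ a = r ^ (a * b) * (r ^ 2) ^ a := by ring
    _ ≤ (((n : ℝ) + 1) ^ E) ^ (a * b) * (G * ((n : ℝ) + 1) ^ E) ^ a := by gcongr
    _ = ((n : ℝ) + 1) ^ (a * (b + 1) * E) * G ^ a := by ring

/-- The threshold at which the universal test for alphabets of `a` and `b` letters has error of the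
second kind at most `gFac n a d * 2 ^ (-n * R)`. -/
def rateThreshold (n d a b : ℕ) (R : ℝ) : ℝ :=
  (2 : ℝ) ^ (n * R) * ((symmTables (Fin d) n).card : ℝ) ^ (a * b) / gFac n a d

lemma rateThreshold_pos [Nonempty (Fin d)] (hn : n ≠ 0) (a b : ℕ) (R : ℝ) :
    0 < rateThreshold n d a b R := by
  have hgFac := gFac_pos hn a (Fin.pos_iff_nonempty.2 ‹_›).ne'
  have hcard := card_symmTables_pos (D := Fin d) n
  unfold rateThreshold
  positivity

lemma inv_rateThreshold_mul [Nonempty (Fin d)] (n a b : ℕ) (R : ℝ) :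
    (rateThreshold n d a b R)⁻¹ * ((symmTables (Fin d) n).card : ℝ) ^ (a * b) =
      gFac n a d * (2 : ℝ) ^ (-(n : ℝ) * R) := by
  have hcard := card_symmTables_pos (D := Fin d) n
  rw [rateThreshold, neg_mul, Real.rpow_neg zero_le_two]
  field_simp

lemma rateThreshold_mul_rpow_le [Nonempty (Fin d)] (hn : n ≠ 0) (a : ℕ) {b : ℕ} (hb : b ≠ 0)
    (R : ℝ) {t : ℝ} (ht : 0 ≤ t) :
    (rateThreshold n d a b R * (symmTables (Fin d) n).card ^ a) ^ t ≤
      ((n : ℝ) + 1) ^ (t * a * b * (d - 1) * d / 2 + (d - 1) * t * a * b) *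
        (2 : ℝ) ^ (n * t * R) := by
  have hd : 1 ≤ d := Fin.pos_iff_nonempty.2 ‹_›
  have hnonneg := (rateThreshold_pos (d := d) hn a b R).le
  have hle : rateThreshold n d a b R * (symmTables (Fin d) n).card ^ a ≤
      (2 : ℝ) ^ (n * R) * ((n : ℝ) + 1) ^ (a * b * (d.choose 2 + (d - 1))) := by
    rw [rateThreshold, mul_div_assoc, mul_assoc]
    gcongr
    exact card_symmTables_pow_div_gFac_mul_le hn a hb
  refine (Real.rpow_le_rpow (by positivity) hle ht).trans_eq ?_
  rw [Real.mul_rpow (by positivity) (by positivity), ← Real.rpow_mul zero_le_two, mul_comm,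
    ← Real.rpow_natCast_mul (by positivity)]
  push_cast [Nat.cast_choose_two, Nat.cast_sub hd]
  ring_nf

lemma fFac_mul_two_rpow {cardS : ℕ} (hS : cardS ≠ 0) (n a b d : ℕ) (t R I : ℝ) :
    fFac n cardS a b d t * (2 : ℝ) ^ (n * t * (R - I)) =
      ((n : ℝ) + 1) ^ (cardS - 1) *
        (((n : ℝ) + 1) ^ (t * a * b * (d - 1) * d / 2 + (d - 1) * t * a * b) *
          (2 : ℝ) ^ (n * t * R) * (2 : ℝ) ^ (-(n * t * I))) := by
  have hpow : ((n : ℝ) + 1) ^ (cardS - 1) = ((n : ℝ) + 1) ^ ((cardS : ℝ) - 1) := by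
    rw [← Real.rpow_natCast, Nat.cast_sub (Nat.one_le_iff_ne_zero.2 hS), Nat.cast_one]
  have hsplit : (n : ℝ) * t * (R - I) = n * t * R + -(n * t * I) := by ring
  rw [fFac, add_assoc, Real.rpow_add n.cast_add_one_pos, hpow, hsplit, Real.rpow_add two_pos]
  simp only [mul_assoc]

lemma fFac_comm (n cardS a b d : ℕ) (t : ℝ) : fFac n cardS a b d t = fFac n cardS b a d t := by
  unfold fFac
  ring_nf

lemma fFac_one_mul (n cardS a b d : ℕ) (t : ℝ) :
    fFac n cardS 1 (a * b) d t = fFac n cardS a b d t := by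
  unfold fFac
  push_cast
  ring_nf

end Threshold

section ProbabilityVectors

variable {α γ δ : Type*} [Fintype α] [DecidableEq α] [Fintype γ] [Fintype δ]

lemma ProbVec.nonempty (p : ProbVec γ) : Nonempty γ := by
  by_contra hempty
  rw [not_nonempty_iff] at hempty
  simpa using p.2.2

/-- The product of two probability distributions. -/
def prodProbVec (p : ProbVec γ) (q : ProbVec δ) : ProbVec (γ × δ) :=
  ⟨fun c => p.1 c.1 * q.1 c.2, fun c => mul_nonneg (p.2.1 c.1) (q.2.1 c.2), by
    rw [Fintype.sum_prod_type, ← Finset.sum_mul_sum, p.2.2, q.2.2, one_mul]⟩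

/-- The probability distribution on a one-letter alphabet. -/
def unitProbVec : ProbVec Unit := ⟨fun _ => 1, fun _ => zero_le_one, by simp⟩

lemma iidMean_unit (F : (α → Unit) → ℝ) : iidMean unitProbVec.1 F = F fun _ => () :=
  iidMean_const unitProbVec (F fun _ => ())

lemma iidMean_prodProbVec (p : ProbVec γ) (q : ProbVec δ) (F : (α → γ × δ) → ℝ) :
    iidMean (prodProbVec p q).1 F =
      iidMean p.1 fun u => iidMean q.1 fun v => F fun k => (u k, v k) :=
  iidMean_pair p.1 q.1 F

end ProbabilityVectors

section RateTest

variable {n d : ℕ} {γ δ S : Type*} [Fintype γ] [DecidableEq γ] [Fintype δ] [DecidableEq δ]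
  [Fintype S]

/-- The universal test of rate `R` for the correlation of the word `v` with the quantum system,
given the word `u`. -/
def rateTest (d : ℕ) (R : ℝ) (u : Fin n → γ) (v : Fin n → δ) :
    Matrix (Fin n → Fin d) (Fin n → Fin d) ℂ :=
  universalTest (Fin d) (rateThreshold n d (Fintype.card γ) (Fintype.card δ) R) u v

lemma iidMean_rateTest_mul_le (hn : n ≠ 0) (R : ℝ) (p : ProbVec γ) (q : ProbVec δ)
    {σ : (Fin n → γ) → Matrix (Fin n → Fin d) (Fin n → Fin d) ℂ} (hσ : ∀ u, IsDensity (σ u)) :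
    (iidMean p.1 fun u => iidMean q.1 fun v => (rateTest d R u v * σ u).trace.re) ≤
      gFac n (Fintype.card γ) d * (2 : ℝ) ^ (-(n : ℝ) * R) := by
  refine iidMean_le_of_forall_le p fun u => ?_
  have : Nonempty (Fin d) := (hσ u).nonempty.map (· ⟨0, Nat.pos_of_ne_zero hn⟩)
  rw [← inv_rateThreshold_mul (d := d) n _ (Fintype.card δ)]
  have hle := iidMean_re_trace_universalTest_mul_le
    (rateThreshold_pos (d := d) hn (Fintype.card γ) (Fintype.card δ) R) q u (hσ u)
  rwa [Fintype.card_fin] at hle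

lemma iidMean_one_sub_rateTest_mul_le (hn : n ≠ 0) (R : ℝ) (p : ProbVec γ) (q : ProbVec δ)
    {ρ : γ → δ → S → Matrix (Fin d) (Fin d) ℂ} (hρ : ∀ c e s, IsDensity (ρ c e s)) {t : ℝ}
    (ht : t ∈ Set.Ioo 0 1) (s : Fin n → S) :
    (iidMean p.1 fun u => iidMean q.1 fun v =>
      ((1 - rateTest d R u v) * tensorFam fun k => ρ (u k) (v k) (s k)).trace.re) ≤
      fFac n (Fintype.card S) (Fintype.card γ) (Fintype.card δ) d t *
        (2 : ℝ) ^ (n * t *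
          (R - ⨅ Q : ProbVec S, condRenyi p.1 q.1 (fun c e => ∑ s, Q.1 s • ρ c e s) t)) := by
  have : Nonempty (Fin n) := Fin.pos_iff_nonempty.1 (Nat.pos_of_ne_zero hn)
  have : Nonempty S := ‹Nonempty (Fin n)›.map s
  have : Nonempty δ := q.nonempty
  have : Nonempty (Fin d) := by
    obtain ⟨c⟩ := p.nonempty
    exact (hρ c (Classical.arbitrary δ) (Classical.arbitrary S)).nonempty
  have hθ := rateThreshold_pos (d := d) hn (Fintype.card γ) (Fintype.card δ) R
  obtain ⟨Q, hQ⟩ := exists_typeIError_le hθ.le p q hρ ht s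
  rw [Fintype.card_fin] at hQ
  rw [fFac_mul_two_rpow Fintype.card_ne_zero]
  refine hQ.trans (mul_le_mul_of_nonneg_left ?_ (by positivity))
  have ht0 := ht.1.le
  exact mul_le_mul (rateThreshold_mul_rpow_le hn _ Fintype.card_ne_zero R ht0)
    (renyiTrace_rpow_pow_le hn p q hρ ht Q)
    (pow_nonneg (Real.rpow_nonneg
      (renyiTrace_nonneg p q (fun c e => isDensity_sum_smul Q (hρ c e)) t) _) _) (by positivity)

end RateTest

section JointTest

variable {n d : ℕ} {γ δ S : Type*} [Fintype γ] [DecidableEq γ] [Fintype δ] [DecidableEq δ]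
  [Fintype S]

/-- The universal test of rate `R` for the correlation of the pair of words `(u, v)` with the
quantum system: the conditional test, given a word over a one-letter alphabet. -/
def jointRateTest (d : ℕ) (R : ℝ) (u : Fin n → γ) (v : Fin n → δ) :
    Matrix (Fin n → Fin d) (Fin n → Fin d) ℂ :=
  rateTest d R (fun _ => ()) fun k => (u k, v k)

lemma iidMean_jointRateTest_mul_le (hn : n ≠ 0) (R : ℝ) (p : ProbVec γ) (q : ProbVec δ)
    {σ : Matrix (Fin n → Fin d) (Fin n → Fin d) ℂ} (hσ : IsDensity σ) :
    (iidMean p.1 fun u => iidMean q.1 fun v => (jointRateTest d R u v * σ).trace.re) ≤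
      gFac n 1 d * (2 : ℝ) ^ (-(n : ℝ) * R) := by
  have hle := iidMean_rateTest_mul_le hn R unitProbVec (prodProbVec p q) fun _ => hσ
  rwa [Fintype.card_unit, iidMean_unit, iidMean_prodProbVec] at hle

lemma iidMean_one_sub_jointRateTest_mul_le (hn : n ≠ 0) (R : ℝ) (p : ProbVec γ) (q : ProbVec δ)
    {ρ : γ → δ → S → Matrix (Fin d) (Fin d) ℂ} (hρ : ∀ c e s, IsDensity (ρ c e s)) {t : ℝ}
    (ht : t ∈ Set.Ioo 0 1) (s : Fin n → S) :
    (iidMean p.1 fun u => iidMean q.1 fun v =>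
      ((1 - jointRateTest d R u v) * tensorFam fun k => ρ (u k) (v k) (s k)).trace.re) ≤
      fFac n (Fintype.card S) (Fintype.card γ) (Fintype.card δ) d t *
        (2 : ℝ) ^ (n * t *
          (R - ⨅ Q : ProbVec S, renyiXY p.1 q.1 (fun c e => ∑ s, Q.1 s • ρ c e s) t)) := by
  have hle := iidMean_one_sub_rateTest_mul_le hn R unitProbVec (prodProbVec p q)
    (fun _ c => hρ c.1 c.2) ht s
  rw [Fintype.card_unit, Fintype.card_prod, fFac_one_mul, iidMean_unit,
    iidMean_prodProbVec] at hle
  simp only [renyiXY_eq_condRenyi]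
  exact hle

end JointTest

section ControlledOperator

variable {X Y B : Type*} [DecidableEq X] [DecidableEq Y]

/-- The operator `∑_{x,y} |x⟩⟨x| ⊗ |y⟩⟨y| ⊗ T x y`, which reads off `x` and `y` and then acts by
`T x y`. -/
def controlled (T : X → Y → Matrix B B ℂ) : Matrix ((X × Y) × B) ((X × Y) × B) ℂ :=
  cqState2 1 1 T

lemma conjTranspose_controlled (T : X → Y → Matrix B B ℂ) :
    (controlled T)ᴴ = controlled fun x y => (T x y)ᴴ := by
  ext ⟨c, b⟩ ⟨c', b'⟩
  by_cases h : c = c'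
  · simp [controlled, cqState2, h]
  · simp [controlled, cqState2, h, Ne.symm h]

lemma one_sub_controlled [DecidableEq B] (T : X → Y → Matrix B B ℂ) :
    1 - controlled T = controlled fun x y => 1 - T x y := by
  ext ⟨c, b⟩ ⟨c', b'⟩
  by_cases h : c = c' <;> simp [controlled, cqState2, Matrix.one_apply, h]

variable [Fintype X] [Fintype Y] [Fintype B]

lemma controlled_mul_cqState2 (T : X → Y → Matrix B B ℂ) (wX : X → ℝ) (wY : Y → ℝ)
    (ρ : X → Y → Matrix B B ℂ) :
    controlled T * cqState2 wX wY ρ = cqState2 wX wY fun x y => T x y * ρ x y := by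
  ext ⟨c, b⟩ ⟨c', b'⟩
  by_cases h : c = c' <;>
    simp [controlled, cqState2, Matrix.mul_apply, Fintype.sum_prod_type, h, Finset.mul_sum,
      mul_left_comm]

lemma re_trace_cqState2 (wX : X → ℝ) (wY : Y → ℝ) (ρ : X → Y → Matrix B B ℂ) :
    (cqState2 wX wY ρ).trace.re = ∑ x, wX x * ∑ y, wY y * (ρ x y).trace.re := by
  simp [Matrix.trace, cqState2, Fintype.sum_prod_type, Finset.mul_sum, mul_assoc]

omit [Fintype X] [Fintype Y] [Fintype B] in
lemma posSemidef_controlled [Finite X] [Finite Y] [Finite B] {T : X → Y → Matrix B B ℂ}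
    (hT : ∀ x y, (T x y).PosSemidef) : (controlled T).PosSemidef := by
  classical
  cases nonempty_fintype X
  cases nonempty_fintype Y
  cases nonempty_fintype B
  choose C hC using fun x y => CStarAlgebra.nonneg_iff_eq_star_mul_self.1 (hT x y).nonneg
  have hsq : controlled T = (controlled C)ᴴ * controlled C := by
    rw [conjTranspose_controlled, controlled.eq_1 C, controlled_mul_cqState2]
    exact congrArg controlled (funext fun x => funext (hC x))
  exact hsq ▸ Matrix.posSemidef_conjTranspose_mul_self _

end ControlledOperator

section ControlledTest

variable {𝒳 𝒴 : Type*} [Fintype 𝒳] [DecidableEq 𝒳] [Fintype 𝒴] [DecidableEq 𝒴] {n d : ℕ}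

lemma re_trace_controlled_mul_cq2n
    (T : (Fin n → 𝒳) → (Fin n → 𝒴) → Matrix (Fin n → Fin d) (Fin n → Fin d) ℂ) (PX : 𝒳 → ℝ)
    (PY : 𝒴 → ℝ)
    (F : (Fin n → 𝒳) → (Fin n → 𝒴) → Matrix (Fin n → Fin d) (Fin n → Fin d) ℂ) :
    (controlled T * cq2n n PX PY F).trace.re =
      iidMean PX fun x => iidMean PY fun y => (T x y * F x y).trace.re := by
  rw [cq2n, controlled_mul_cqState2, re_trace_cqState2]
  rfl

end ControlledTest

/-- For finite `𝒮`: universal tests `T_X`, `T_Y`, `T₀` for multiple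
independence testing, with the bounds (i)–(vi). -/
theorem statement7 {𝒳 𝒴 𝒮 : Type*} [Fintype 𝒳] [DecidableEq 𝒳] [Fintype 𝒴] [DecidableEq 𝒴]
    [Fintype 𝒮] [Nonempty 𝒮] {d : ℕ}
    (ρ : 𝒳 → 𝒴 → 𝒮 → Matrix (Fin d) (Fin d) ℂ)
    (hρ : ∀ x y s, IsDensity (ρ x y s))
    (n : ℕ) (hn : 1 ≤ n) (R1 R2 : ℝ) (hR1 : 0 < R1) (hR2 : 0 < R2) :
    ∃ TXt TYt T0 : Matrix (((Fin n → 𝒳) × (Fin n → 𝒴)) × (Fin n → Fin d))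
        (((Fin n → 𝒳) × (Fin n → 𝒴)) × (Fin n → Fin d)) ℂ,
      TXt.PosSemidef ∧ (1 - TXt).PosSemidef ∧ TYt.PosSemidef ∧ (1 - TYt).PosSemidef ∧
      T0.PosSemidef ∧ (1 - T0).PosSemidef ∧
      ∀ PX : 𝒳 → ℝ, (∀ x, 0 ≤ PX x) → (∑ x, PX x = 1) →
      ∀ PY : 𝒴 → ℝ, (∀ y, 0 ≤ PY y) → (∑ y, PY y = 1) →
      ∀ t : ℝ, t ∈ Set.Ioo (0 : ℝ) 1 →
        -- (i)
        (∀ sv : Fin n → 𝒮,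
          (Matrix.trace ((1 - TXt) *
            cq2n n PX PY (fun xv yv => tensorFam fun k => ρ (xv k) (yv k) (sv k)))).re ≤
            fFac n (Fintype.card 𝒮) (Fintype.card 𝒳) (Fintype.card 𝒴) d t *
              (2 : ℝ) ^ ((n : ℝ) * t *
                (R2 - ⨅ Q : ProbVec 𝒮,
                  renyiYgX PX PY (fun x y => ∑ s, Q.1 s • ρ x y s) t))) ∧
        -- (ii)
        (∀ σf : (Fin n → 𝒳) → Matrix (Fin n → Fin d) (Fin n → Fin d) ℂ,
          (∀ xv, IsDensity (σf xv)) →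
          (Matrix.trace (TXt * cq2n n PX PY (fun xv _ => σf xv))).re ≤
            gFac n (Fintype.card 𝒳) d * (2 : ℝ) ^ (-(n : ℝ) * R2)) ∧
        -- (iii)
        (∀ sv : Fin n → 𝒮,
          (Matrix.trace ((1 - TYt) *
            cq2n n PX PY (fun xv yv => tensorFam fun k => ρ (xv k) (yv k) (sv k)))).re ≤
            fFac n (Fintype.card 𝒮) (Fintype.card 𝒳) (Fintype.card 𝒴) d t *
              (2 : ℝ) ^ ((n : ℝ) * t *
                (R1 - ⨅ Q : ProbVec 𝒮,
                  renyiXgY PX PY (fun x y => ∑ s, Q.1 s • ρ x y s) t))) ∧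
        -- (iv)
        (∀ σf : (Fin n → 𝒴) → Matrix (Fin n → Fin d) (Fin n → Fin d) ℂ,
          (∀ yv, IsDensity (σf yv)) →
          (Matrix.trace (TYt * cq2n n PX PY (fun _ yv => σf yv))).re ≤
            gFac n (Fintype.card 𝒴) d * (2 : ℝ) ^ (-(n : ℝ) * R1)) ∧
        -- (v)
        (∀ sv : Fin n → 𝒮,
          (Matrix.trace ((1 - T0) *
            cq2n n PX PY (fun xv yv => tensorFam fun k => ρ (xv k) (yv k) (sv k)))).re ≤
            fFac n (Fintype.card 𝒮) (Fintype.card 𝒳) (Fintype.card 𝒴) d t *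
              (2 : ℝ) ^ ((n : ℝ) * t *
                (R1 + R2 - ⨅ Q : ProbVec 𝒮,
                  renyiXY PX PY (fun x y => ∑ s, Q.1 s • ρ x y s) t))) ∧
        -- (vi)
        (∀ σ : Matrix (Fin n → Fin d) (Fin n → Fin d) ℂ, IsDensity σ →
          (Matrix.trace (T0 * cq2n n PX PY (fun _ _ => σ))).re ≤
            gFac n 1 d * (2 : ℝ) ^ (-(n : ℝ) * (R1 + R2))) := by
  have hn0 : n ≠ 0 := Nat.one_le_iff_ne_zero.1 hn
  refine ⟨controlled fun x y => rateTest d R2 x y, controlled fun x y => rateTest d R1 y x,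
    controlled fun x y => jointRateTest d (R1 + R2) x y, ?_⟩
  simp only [one_sub_controlled, re_trace_controlled_mul_cq2n]
  refine ⟨posSemidef_controlled fun _ _ => posSemidef_universalTest _ _ _,
    posSemidef_controlled fun _ _ => Matrix.le_iff.1 (universalTest_le_one _ _ _),
    posSemidef_controlled fun _ _ => posSemidef_universalTest _ _ _,
    posSemidef_controlled fun _ _ => Matrix.le_iff.1 (universalTest_le_one _ _ _),
    posSemidef_controlled fun _ _ => posSemidef_universalTest _ _ _,
    posSemidef_controlled fun _ _ => Matrix.le_iff.1 (universalTest_le_one _ _ _), ?_⟩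
  intro PX hPX hPX1 PY hPY hPY1 t ht
  let p : ProbVec 𝒳 := ⟨PX, hPX, hPX1⟩
  let q : ProbVec 𝒴 := ⟨PY, hPY, hPY1⟩
  refine ⟨iidMean_one_sub_rateTest_mul_le hn0 R2 p q hρ ht,
    fun _ => iidMean_rateTest_mul_le hn0 R2 p q, fun s => ?_, fun σ hσ => ?_,
    iidMean_one_sub_jointRateTest_mul_le hn0 (R1 + R2) p q hρ ht,
    fun _ => iidMean_jointRateTest_mul_le hn0 (R1 + R2) p q⟩
  · rw [iidMean_comm, fFac_comm]
    exact iidMean_one_sub_rateTest_mul_le hn0 R1 q p (fun y x => hρ x y) ht s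
  · rw [iidMean_comm]
    exact iidMean_rateTest_mul_le hn0 R1 q p hσ
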